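/- arXiv:funct-an/9406003 — 3 statements merged into one kernel-verified Lean document; each statement's English description precedes it below -/
import Mathlib

section
/- Any two infinite-dimensional, unital, simple AF C*-algebras are isomorphic as Banach spaces, i.e. there is a continuous ℂ-linear bijection between them with continuous inverse. -/
/-!
Statement 6.

Any two infinite-dimensional unital simple AF C*-algebras are isomorphic as
Banach spaces.
-/

/-- `S` is an AF presentation of the C*-algebra `A`: an increasing sequence of
finite-dimensional *-subalgebras whose union is dense. -/
def IsAFPresentation (A : Type*) [NonUnitalCStarAlgebra A]
    (S : ℕ → NonUnitalStarSubalgebra ℂ A) : Prop :=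
  Monotone S ∧ (∀ k, FiniteDimensional ℂ (S k)) ∧ Dense (⋃ k, (S k : Set A))

/-- A C*-algebra is simple if its only closed two-sided ideals are `{0}` and
the whole algebra. -/
def IsSimpleCStarAlgebra (A : Type*) [NonUnitalCStarAlgebra A] : Prop :=
  ∀ I : TwoSidedIdeal A, IsClosed (I : Set A) → I = ⊥ ∨ I = ⊤

/-!
Let `S` be an AF presentation of `A` and let `B` be simple and infinite-dimensional. By simplicity
of `B`, the stages `S k` have faithful non-unital representations in `B` with ever smaller units
`q k`, obtained from copies in `B` of their left regular representations and arranged so that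
compressing a stage of `B` by a later `q k` lands in a copy of a stage of `A`. In the limit these
compressions give a contraction `B → A`. It is a left inverse of the linear embedding `A → B` that
follows trace-preserving conditional expectations off the corner `q k`, so `A` is complemented in
`B`. Applied to the AF algebra of convergent sequences in `B`, which absorbs a summand `B`, this
gives `B ≃ B × B`, and Pełczyński's decomposition concludes.
-/

namespace AFAlgebra

open Filter Topology

/-! ### Unital presentations -/

section UnitalPresentation

theorem one_mem_of_isUnit_mem {K R : Type*} [Field K] [Ring R] [Algebra K R]
    (S : NonUnitalSubalgebra K R) [FiniteDimensional K S] {u : R} (hu : IsUnit u) (huS : u ∈ S) :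
    1 ∈ S := by
  have hinj : Function.Injective (LinearMap.mulLeft K (⟨u, huS⟩ : S)) := fun a b hab ↦
    Subtype.ext (hu.mul_left_cancel (congrArg Subtype.val hab))
  obtain ⟨y, hy⟩ := LinearMap.injective_iff_surjective.1 hinj ⟨u, huS⟩
  have hy1 : (y : R) = 1 :=
    hu.mul_left_cancel ((congrArg Subtype.val hy).trans (mul_one u).symm)
  exact hy1 ▸ y.2

/-- An AF presentation all of whose stages contain the unit of the algebra, so that each stage is
itself a unital C*-algebra. -/
structure IsUnitalAFPresentation {A : Type*} [CStarAlgebra A]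
    (S : ℕ → StarSubalgebra ℂ A) : Prop where
  monotone : Monotone S
  finiteDimensional : ∀ k, FiniteDimensional ℂ (S k)
  dense : Dense (⋃ k, (S k : Set A))

variable {A : Type*} [CStarAlgebra A]

theorem exists_isUnitalAFPresentation
    (h : ∃ S : ℕ → NonUnitalStarSubalgebra ℂ A, IsAFPresentation A S) :
    ∃ S : ℕ → StarSubalgebra ℂ A, IsUnitalAFPresentation S := by
  obtain ⟨S, hmono, hfin, hdense⟩ := h
  obtain ⟨u, hu, huS⟩ := hdense.inter_open_nonempty _ Units.isOpen ⟨1, isUnit_one⟩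
  obtain ⟨n, hn⟩ := Set.mem_iUnion.1 huS
  have := hfin n
  have hone : 1 ∈ S n := one_mem_of_isUnit_mem (S n).toNonUnitalSubalgebra hu hn
  refine ⟨fun k ↦ (S (n + k)).toStarSubalgebra (hmono (n.le_add_right k) hone),
    fun i j hij ↦ hmono (Nat.add_le_add_left hij n), fun k ↦ hfin (n + k), hdense.mono ?_⟩
  exact Set.iUnion_mono fun k ↦ hmono (k.le_add_left n)

theorem IsUnitalAFPresentation.eventually_exists_dist_lt {S : ℕ → StarSubalgebra ℂ A}
    (hS : IsUnitalAFPresentation S) (x : A) {ε : ℝ} (hε : 0 < ε) :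
    ∀ᶠ k in atTop, ∃ a ∈ S k, dist x a < ε := by
  obtain ⟨a, ha, hxa⟩ := Metric.mem_closure_iff.1 (hS.dense x) ε hε
  obtain ⟨n, hn⟩ := Set.mem_iUnion.1 ha
  exact (eventually_ge_atTop n).mono fun k hk ↦ ⟨a, hS.monotone hk hn, hxa⟩

theorem IsUnitalAFPresentation.exists_mem_of_isOpen {S : ℕ → StarSubalgebra ℂ A}
    (hS : IsUnitalAFPresentation S) {U : Set A} (hU : IsOpen U) (hne : U.Nonempty) (n : ℕ) :
    ∃ k ≥ n, ∃ a ∈ S k, a ∈ U := by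
  obtain ⟨a, haU, ha⟩ := hS.dense.inter_open_nonempty U hU hne
  obtain ⟨k, hk⟩ := Set.mem_iUnion.1 ha
  exact ⟨max n k, le_max_left n k, a, hS.monotone (le_max_right n k) hk, haU⟩

instance isClosed_of_finiteDimensional (S : StarSubalgebra ℂ A) [FiniteDimensional ℂ S] :
    IsClosed (S : Set A) :=
  Submodule.closed_of_finiteDimensional (Subalgebra.toSubmodule S.toSubalgebra)

end UnitalPresentation

/-! ### Simplicity -/

section Simple

open scoped Pointwise

theorem isSimpleRing_of_isSimpleCStarAlgebra {B : Type*} [CStarAlgebra B] [Nontrivial B]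
    (hB : IsSimpleCStarAlgebra B) : IsSimpleRing B := by
  refine ⟨⟨fun I ↦ or_iff_not_imp_right.2 fun hI ↦ ?_⟩⟩
  have hI' : I.asIdeal ≠ ⊤ := fun h ↦ hI (I.one_mem_iff.1 (by
    rw [← TwoSidedIdeal.mem_asIdeal, h]; trivial))
  have : I.asIdeal.closure.IsTwoSided := ⟨fun b hx ↦
    map_mem_closure (f := (· * b)) (by fun_prop) hx fun _ h ↦ I.mul_mem_right _ _ h⟩
  rcases hB I.asIdeal.closure.toTwoSided
    (by rw [Ideal.coe_toTwoSided]; exact isClosed_closure) with h | h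
  · refine le_bot_iff.1 fun x hx ↦ ?_
    rw [← h, Ideal.mem_toTwoSided]
    exact subset_closure (TwoSidedIdeal.mem_asIdeal.2 hx)
  · refine absurd ?_ (Ideal.closure_ne_top _ hI')
    rw [Ideal.eq_top_iff_one, ← Ideal.mem_toTwoSided, h]
    trivial

variable {R : Type*} [Ring R] [IsSimpleRing R] {e : R}

theorem exists_sum_mul_mul_eq_one (he : e ≠ 0) :
    ∃ (n : ℕ) (x y : Fin n → R), ∑ i, x i * e * y i = 1 := by
  have hspan : ∀ z ∈ AddSubgroup.closure (Set.univ * {e} * Set.univ : Set R),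
      ∃ (n : ℕ) (x y : Fin n → R), ∑ i, x i * e * y i = z := by
    intro z hz
    induction hz using AddSubgroup.closure_induction with
    | mem z hz =>
      obtain ⟨-, ⟨x, -, -, rfl, rfl⟩, y, -, rfl⟩ := hz
      exact ⟨1, fun _ ↦ x, fun _ ↦ y, by simp⟩
    | zero => exact ⟨0, 0, 0, by simp⟩
    | add z w _ _ hz hw =>
      obtain ⟨m, x, y, rfl⟩ := hz
      obtain ⟨n, x', y', rfl⟩ := hw
      exact ⟨m + n, Fin.append x x', Fin.append y y', by simp [Fin.sum_univ_add]⟩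
    | neg z _ hz =>
      obtain ⟨n, x, y, rfl⟩ := hz
      exact ⟨n, -x, y, by simp⟩
  exact hspan 1 (TwoSidedIdeal.mem_span_iff_mem_addSubgroup_closure.1
    (IsSimpleRing.one_mem_of_ne_zero_mem _ he (TwoSidedIdeal.subset_span rfl)))

theorem exists_mul_mul_ne_zero (he : e ≠ 0) {p : R} (hp : p ≠ 0) : ∃ b, e * b * p ≠ 0 := by
  by_contra! h
  obtain ⟨n, x, y, hxy⟩ := exists_sum_mul_mul_eq_one he
  refine hp ?_
  calc p = (∑ i, x i * e * y i) * p := by rw [hxy, one_mul]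
    _ = ∑ i, x i * (e * y i * p) := by simp only [Finset.sum_mul, mul_assoc]
    _ = 0 := by simp only [h, mul_zero, Finset.sum_const_zero]

theorem finite_of_corner_subset_span (K : Type*) [Field K] [Algebra K R] (he : e ≠ 0)
    (h : ∀ b, e * b * e ∈ Submodule.span K {e}) : FiniteDimensional K R := by
  obtain ⟨n, x, y, hxy⟩ := exists_sum_mul_mul_eq_one he
  let v (ij : Fin n × Fin n) : R := x ij.1 * e * y ij.2
  refine FiniteDimensional.of_surjective (Fintype.linearCombination K v) fun b ↦ ?_
  choose c hc using fun ij : Fin n × Fin n ↦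
    Submodule.mem_span_singleton.1 (h (y ij.1 * b * x ij.2))
  refine ⟨c, ?_⟩
  calc Fintype.linearCombination K v c
    _ = ∑ ij : Fin n × Fin n, x ij.1 * (c ij • e) * y ij.2 := by
        simp [Fintype.linearCombination_apply, v]
    _ = ∑ ij : Fin n × Fin n, (x ij.1 * e * y ij.1) * b * (x ij.2 * e * y ij.2) := by
        simp only [hc, mul_assoc]
    _ = (∑ i, x i * e * y i) * b * ∑ j, x j * e * y j := by
        rw [Finset.sum_mul, Finset.sum_mul_sum, Fintype.sum_prod_type]
    _ = b := by rw [hxy, one_mul, mul_one]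

end Simple

/-! ### Finite-dimensional C*-algebras -/

section FiniteDimensional

theorem hasEigenvalue_lmul_iff {K R : Type*} [Field K] [Ring R] [Algebra K R]
    [FiniteDimensional K R] {h : R} {μ : K} :
    Module.End.HasEigenvalue (Algebra.lmul K R h) μ ↔ μ ∈ spectrum K h := by
  rw [Module.End.hasEigenvalue_iff_mem_spectrum, spectrum.mem_iff, spectrum.mem_iff,
    ← (Algebra.lmul K R).commutes, ← map_sub, Algebra.lmul_isUnit_iff]

variable {D : Type*} [CStarAlgebra D] [FiniteDimensional ℂ D]

theorem exists_ne_zero_mul_eq_smul {h : D} {μ : ℝ} (hμ : μ ∈ spectrum ℝ h) :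
    ∃ a ≠ 0, h * a = μ • a := by
  obtain ⟨a, ha, ha0⟩ := (hasEigenvalue_lmul_iff (K := ℂ)
    |>.2 (spectrum.algebraMap_mem ℂ hμ)).exists_hasEigenvector
  exact ⟨a, ha0, by simpa using Module.End.mem_eigenspace_iff.1 ha⟩

theorem finite_spectrum_real (h : D) : (spectrum ℝ h).Finite := by
  have hfin : (spectrum ℂ h).Finite :=
    (Module.End.finite_hasEigenvalue (Algebra.lmul ℂ D h)).subset
      fun _ hμ ↦ hasEigenvalue_lmul_iff.2 hμ
  rw [← spectrum.preimage_algebraMap ℂ]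
  exact hfin.preimage (FaithfulSMul.algebraMap_injective ℝ ℂ).injOn

theorem exists_spectral_projection {h : D} (hsa : IsSelfAdjoint h) {μ : ℝ}
    (hμ : μ ∈ spectrum ℝ h) :
    ∃ p : D, IsStarProjection p ∧ p ≠ 0 ∧ h * p = μ • p := by
  let f : ℝ → ℝ := Set.indicator {μ} 1
  have hf : ContinuousOn f (spectrum ℝ h) := (finite_spectrum_real h).continuousOn f
  refine ⟨cfc f h, ⟨?_, cfc_predicate f h⟩, fun hzero ↦ ?_, ?_⟩
  · rw [IsIdempotentElem, ← cfc_mul f f h]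
    exact cfc_congr fun x _ ↦ by by_cases hx : x = μ <;> simp [f, hx]
  · have hfμ : f μ = 0 :=
      (cfc_eq_cfc_iff_eqOn (g := 0)).1 (hzero.trans (cfc_zero ℝ h).symm) hμ
    simp [f] at hfμ
  · calc h * cfc f h = cfc (fun x ↦ x * f x) h := by
          rw [cfc_mul (fun x : ℝ ↦ x) f h, cfc_id' ℝ h]
      _ = cfc (fun x ↦ μ • f x) h :=
          cfc_congr fun x _ ↦ by by_cases hx : x = μ <;> simp [f, hx]
      _ = μ • cfc f h := cfc_smul μ f h

end FiniteDimensional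

/-! ### Faithful traces -/

section Trace

open scoped ComplexOrder

/-- A faithful positive trace on a complex `*`-algebra. It makes the algebra a pre-Hilbert space
for `⟪x, y⟫ = τ (star x * y)`; the trace need not be normalised. -/
structure IsFaithfulTrace {D : Type*} [Ring D] [StarRing D] [Algebra ℂ D]
    (τ : D →ₗ[ℂ] ℂ) : Prop where
  map_mul_comm : ∀ x y, τ (x * y) = τ (y * x)
  nonneg : ∀ x, 0 ≤ τ (star x * x)
  eq_zero : ∀ x, τ (star x * x) = 0 → x = 0

theorem nonneg_of_mem_spectrum_star_mul_self {D : Type*} [CStarAlgebra D] {x : D} {z : ℂ}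
    (hz : z ∈ spectrum ℂ (star x * x)) : 0 ≤ z := by
  let _ := CStarAlgebra.spectralOrder D
  let _ := CStarAlgebra.spectralOrderedRing D
  exact spectrum_nonneg_of_nonneg (star_mul_self_nonneg x) hz

theorem norm_sq_mem_spectrum_star_mul_self {D : Type*} [CStarAlgebra D] [Nontrivial D] (x : D) :
    ‖x‖ ^ 2 ∈ spectrum ℝ (star x * x) := by
  let _ := CStarAlgebra.spectralOrder D
  let _ := CStarAlgebra.spectralOrderedRing D
  have h := CStarAlgebra.norm_mem_spectrum_of_nonneg (star_mul_self_nonneg x)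
  rwa [CStarRing.norm_star_mul_self, ← sq] at h

/-- The trace of the left regular representation, a faithful trace on every finite-dimensional
C*-algebra. Mathlib's `Algebra.trace` only covers commutative algebras. -/
noncomputable def regularTrace (D : Type*) [Ring D] [Algebra ℂ D] : D →ₗ[ℂ] ℂ :=
  LinearMap.trace ℂ D ∘ₗ (Algebra.lmul ℂ D).toLinearMap

section Regular

variable {D : Type*} [CStarAlgebra D] [FiniteDimensional ℂ D]

theorem mem_roots_charpoly_lmul_iff {h : D} {z : ℂ} :
    z ∈ (Algebra.lmul ℂ D h : Module.End ℂ D).charpoly.roots ↔ z ∈ spectrum ℂ h := by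
  rw [Polynomial.mem_roots (LinearMap.charpoly_monic _).ne_zero,
    ← Module.End.hasEigenvalue_iff_isRoot_charpoly, hasEigenvalue_lmul_iff]

theorem regularTrace_eq_sum_roots (h : D) :
    regularTrace D h = (Algebra.lmul ℂ D h : Module.End ℂ D).charpoly.roots.sum :=
  Module.End.trace_eq_sum_roots_charpoly_of_splits (IsAlgClosed.splits _)

theorem isFaithfulTrace_regularTrace : IsFaithfulTrace (regularTrace D) where
  map_mul_comm x y := by
    simp only [regularTrace, LinearMap.comp_apply, AlgHom.toLinearMap_apply, map_mul]
    exact LinearMap.trace_mul_comm ℂ _ _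
  nonneg x := by
    rw [regularTrace_eq_sum_roots]
    exact Multiset.sum_nonneg fun z hz ↦
      nonneg_of_mem_spectrum_star_mul_self (mem_roots_charpoly_lmul_iff.1 hz)
  eq_zero x hx := by
    rw [regularTrace_eq_sum_roots] at hx
    by_contra hx0
    have : Nontrivial D := ⟨x, 0, hx0⟩
    have hmem : ((‖x‖ ^ 2 : ℝ) : ℂ) ∈ spectrum ℂ (star x * x) :=
      spectrum.algebraMap_mem ℂ (norm_sq_mem_spectrum_star_mul_self x)
    have hzero := Multiset.all_zero_of_le_zero_le_of_sum_eq_zero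
      (fun z hz ↦ nonneg_of_mem_spectrum_star_mul_self (mem_roots_charpoly_lmul_iff.1 hz)) hx _
      (mem_roots_charpoly_lmul_iff.2 hmem)
    exact hx0 (by simpa using hzero)

end Regular

/-- `m` is an orthonormal basis for the pre-Hilbert structure `⟪x, y⟫ = τ (star x * y)`. -/
structure IsTraceBasis {D ι : Type*} [Ring D] [StarRing D] [Algebra ℂ D] [Fintype ι]
    [DecidableEq ι] (τ : D →ₗ[ℂ] ℂ) (m : ι → D) : Prop where
  orthonormal : ∀ i j, τ (star (m i) * m j) = if i = j then 1 else 0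
  sum_smul : ∀ x, ∑ i, τ (star (m i) * x) • m i = x

namespace IsFaithfulTrace

section StarAlgebra

variable {D : Type*} [Ring D] [StarRing D] [Algebra ℂ D] {τ : D →ₗ[ℂ] ℂ} (hτ : IsFaithfulTrace τ)
include hτ

theorem eq_zero_of_forall {y : D} (h : ∀ z, τ (z * y) = 0) : y = 0 :=
  hτ.eq_zero y (h (star y))

theorem comp {C : Type*} [Ring C] [StarRing C] [Algebra ℂ C] {ι : C →⋆ₐ[ℂ] D}
    (hι : Function.Injective ι) : IsFaithfulTrace (τ ∘ₗ ι.toLinearMap) where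
  map_mul_comm x y := by simp [hτ.map_mul_comm (ι x)]
  nonneg x := by simpa [map_star ι] using hτ.nonneg (ι x)
  eq_zero x hx := (map_eq_zero_iff ι hι).1 (hτ.eq_zero (ι x) (by simpa [map_star ι] using hx))

variable [StarModule ℂ D]

theorem map_star (x : D) : τ (star x) = star (τ x) := by
  have him (y : D) : (τ (star y * y)).im = 0 := (Complex.nonneg_iff.1 (hτ.nonneg y)).2.symm
  have hone : (τ 1).im = 0 := by simpa using him 1
  have hadd : (τ 1).im + (τ (star x)).im + (τ x).im = 0 := by
    simpa [mul_add, add_mul, him] using him (1 + x)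
  have hI : (τ 1).im + -(τ (star x)).re + (τ x).re = 0 := by
    simpa [mul_add, add_mul, smul_smul, him] using him (1 + Complex.I • x)
  exact Complex.ext (show (τ (star x)).re = (τ x).re by linarith)
    (show (τ (star x)).im = -(τ x).im by linarith)

theorem exists_isTraceBasis [FiniteDimensional ℂ D] :
    ∃ m : Fin (Module.finrank ℂ D) → D, IsTraceBasis τ m := by
  let core : InnerProductSpace.Core ℂ D :=
    { inner := fun x y ↦ τ (star x * y)
      conj_inner_symm := fun x y ↦ by
        rw [starRingEnd_apply, ← hτ.map_star, star_mul, star_star]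
      re_inner_nonneg := fun x ↦ (Complex.nonneg_iff.1 (hτ.nonneg x)).1
      add_left := fun x y z ↦ by simp [add_mul]
      smul_left := fun x y r ↦ by simp
      definite := hτ.eq_zero }
  let _ : NormedAddCommGroup D := core.toNormedAddCommGroup
  let _ : InnerProductSpace ℂ D := InnerProductSpace.ofCore core.toCore
  let b := stdOrthonormalBasis ℂ D
  exact ⟨b, orthonormal_iff_ite.1 b.orthonormal, b.sum_repr'⟩

end StarAlgebra

theorem star_mul_mul_le {D : Type*} [CStarAlgebra D] {τ : D →ₗ[ℂ] ℂ}
    (hτ : IsFaithfulTrace τ) (x a : D) :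
    τ (star (x * a) * (x * a)) ≤ ((‖x‖ ^ 2 : ℝ) : ℂ) * τ (star a * a) := by
  let _ := CStarAlgebra.spectralOrder D
  let _ := CStarAlgebra.spectralOrderedRing D
  have hle : star a * (star x * x) * a ≤ ‖star x * x‖ • (star a * a) :=
    CStarAlgebra.star_left_conjugate_le_norm_smul
  obtain ⟨w, hw⟩ := CStarAlgebra.nonneg_iff_eq_star_mul_self.1 (sub_nonneg.2 hle)
  have hpos := hτ.nonneg w
  rw [← hw, map_sub, sub_nonneg, CStarRing.norm_star_mul_self, ← sq, ← Complex.coe_smul,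
    map_smul, smul_eq_mul] at hpos
  simpa only [star_mul, mul_assoc] using hpos

end IsFaithfulTrace

section TraceBasis

variable {ι : Type*} [Fintype ι] [DecidableEq ι]

theorem IsTraceBasis.sum_smul_star {D : Type*} [Ring D] [StarRing D] [Algebra ℂ D]
    [StarModule ℂ D] {τ : D →ₗ[ℂ] ℂ} {m : ι → D} (hm : IsTraceBasis τ m) (hτ : IsFaithfulTrace τ)
    (x : D) : ∑ i, τ (x * m i) • star (m i) = x := by
  have h := congrArg star (hm.sum_smul (star x))
  simpa [← hτ.map_star] using h

theorem IsTraceBasis.regularTrace_eq_sum {D : Type*} [Ring D] [StarRing D] [Algebra ℂ D]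
    [FiniteDimensional ℂ D] {m : ι → D} {τ : D →ₗ[ℂ] ℂ} (hm : IsTraceBasis τ m) (x : D) :
    regularTrace D x = ∑ i, τ (star (m i) * (x * m i)) := by
  have hrank : Algebra.lmul ℂ D x = ∑ i,
      (τ ∘ₗ LinearMap.mulLeft ℂ (star (m i))).smulRight (x * m i) := by
    ext y
    nth_rw 1 [← hm.sum_smul y]
    simp
  rw [regularTrace, LinearMap.comp_apply, AlgHom.toLinearMap_apply, hrank]
  simp

theorem IsTraceBasis.sum_mul_star {D : Type*} [CStarAlgebra D] [FiniteDimensional ℂ D]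
    {m : ι → D} (hm : IsTraceBasis (regularTrace D) m) :
    ∑ i, m i * star (m i) = 1 := by
  have hτ := isFaithfulTrace_regularTrace (D := D)
  refine sub_eq_zero.1 (hτ.eq_zero_of_forall fun x ↦ ?_)
  rw [mul_sub, mul_one, map_sub, sub_eq_zero, hm.regularTrace_eq_sum x, Finset.mul_sum, map_sum]
  exact Finset.sum_congr rfl fun i _ ↦ by rw [← mul_assoc, hτ.map_mul_comm]

/-- A choice of orthonormal basis for the pre-Hilbert structure of the regular trace. -/
noncomputable def regularBasis (D : Type*) [CStarAlgebra D] [FiniteDimensional ℂ D] :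
    Fin (Module.finrank ℂ D) → D :=
  isFaithfulTrace_regularTrace.exists_isTraceBasis.choose

theorem isTraceBasis_regularBasis (D : Type*) [CStarAlgebra D] [FiniteDimensional ℂ D] :
    IsTraceBasis (regularTrace D) (regularBasis D) :=
  isFaithfulTrace_regularTrace.exists_isTraceBasis.choose_spec

end TraceBasis

end Trace

/-! ### Conditional expectations -/

section Expectation

open scoped ComplexOrder

variable {C D : Type*} [CStarAlgebra C] [CStarAlgebra D] {ι : C →⋆ₐ[ℂ] D} {τ : D →ₗ[ℂ] ℂ}
  {E : D →ₗ[ℂ] C}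

/-- `E` is the conditional expectation onto `C` preserving the trace `τ`, where `C` is viewed as
a subalgebra of `D` through `ι`. It is encoded as the adjoint of `ι` for the trace pairings;
the module property and contractivity are consequences. -/
def IsExpectation (ι : C →⋆ₐ[ℂ] D) (τ : D →ₗ[ℂ] ℂ) (E : D →ₗ[ℂ] C) : Prop :=
  ∀ z x, τ (ι (z * E x)) = τ (ι z * x)

theorem exists_isExpectation [FiniteDimensional ℂ C] (hτ : IsFaithfulTrace τ)
    (hι : Function.Injective ι) : ∃ E : D →ₗ[ℂ] C, IsExpectation ι τ E := by
  obtain ⟨m, hm⟩ := (hτ.comp hι).exists_isTraceBasis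
  refine ⟨∑ i, (τ ∘ₗ LinearMap.mulLeft ℂ (star (ι (m i)))).smulRight (m i), fun z x ↦ ?_⟩
  calc τ (ι (z * (∑ i, (τ ∘ₗ LinearMap.mulLeft ℂ (star (ι (m i)))).smulRight (m i)) x))
      = ∑ i, τ (star (ι (m i)) * x) * τ (ι (z * m i)) := by
        simp [Finset.mul_sum]
    _ = τ (ι (∑ i, τ (ι (z * m i)) • star (m i)) * x) := by
        simp [Finset.sum_mul, map_star ι, mul_comm]
    _ = τ (ι z * x) := by
        congr 3
        simpa using hm.sum_smul_star (hτ.comp hι) z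

namespace IsExpectation

variable (hE : IsExpectation ι τ E) (hτ : IsFaithfulTrace τ)
include hE hτ

theorem trace_star_mul_self_le (x : D) :
    τ (ι (star (E x) * E x)) ≤ τ (star x * x) := by
  have hcross : τ (ι (star (E x)) * x) = τ (ι (star (E x) * E x)) := (hE _ _).symm
  have hcross' : τ (star x * ι (E x)) = τ (ι (star (E x) * E x)) := by
    have h := congrArg star hcross
    rw [← hτ.map_star, ← hτ.map_star] at h
    simpa [← map_star ι] using h
  have hpos := hτ.nonneg (x - ι (E x))
  have hexpand : star (x - ι (E x)) * (x - ι (E x)) = star x * x - star x * ι (E x) -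
      (ι (star (E x)) * x - ι (star (E x) * E x)) := by
    rw [star_sub, sub_mul, mul_sub, mul_sub, map_mul ι, map_star ι]
  rwa [hexpand, map_sub, map_sub, map_sub, hcross, hcross', sub_self, sub_zero, sub_nonneg] at hpos

variable (hι : Function.Injective ι)
include hι

theorem apply_map (a : C) : E (ι a) = a :=
  sub_eq_zero.1 <| (hτ.comp hι).eq_zero_of_forall fun z ↦ by
    simpa [mul_sub, sub_eq_zero] using hE z (ι a)

theorem apply_mul_map (x : D) (a : C) : E (x * ι a) = E x * a := by
  refine sub_eq_zero.1 <| (hτ.comp hι).eq_zero_of_forall fun z ↦ ?_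
  suffices τ (ι (z * E (x * ι a))) = τ (ι (z * E x * a)) by simpa [mul_sub, sub_eq_zero, mul_assoc]
  calc τ (ι (z * E (x * ι a))) = τ (ι z * x * ι a) := by rw [hE, mul_assoc]
    _ = τ (ι (a * z) * x) := by rw [hτ.map_mul_comm, map_mul ι, mul_assoc]
    _ = τ (ι (a * z * E x)) := (hE _ _).symm
    _ = τ (ι (z * E x * a)) := by
      rw [mul_assoc, map_mul ι a, hτ.map_mul_comm, ← map_mul]

theorem norm_apply_le [FiniteDimensional ℂ C] (x : D) : ‖E x‖ ≤ ‖x‖ := by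
  cases subsingleton_or_nontrivial C
  · simp [Subsingleton.elim (E x) 0]
  obtain ⟨a, ha0, ha⟩ := exists_ne_zero_mul_eq_smul (norm_sq_mem_spectrum_star_mul_self (E x))
  have hne : τ (ι (star a * a)) ≠ 0 := fun h ↦ ha0 ((hτ.comp hι).eq_zero a h)
  have hpos : 0 < τ (ι (star a * a)) := ((hτ.comp hι).nonneg a).lt_of_ne' hne
  have key : ((‖E x‖ ^ 2 : ℝ) : ℂ) * τ (ι (star a * a)) ≤
      ((‖x‖ ^ 2 : ℝ) : ℂ) * τ (ι (star a * a)) :=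
    calc ((‖E x‖ ^ 2 : ℝ) : ℂ) * τ (ι (star a * a)) = τ (ι (star a * (star (E x) * E x * a))) := by
          rw [ha, mul_smul_comm, ← Complex.coe_smul, map_smul, map_smul, smul_eq_mul]
      _ = τ (ι (star (E (x * ι a)) * E (x * ι a))) := by
          rw [hE.apply_mul_map hτ hι, star_mul]; simp only [mul_assoc]
      _ ≤ τ (star (x * ι a) * (x * ι a)) := hE.trace_star_mul_self_le hτ _
      _ ≤ ((‖x‖ ^ 2 : ℝ) : ℂ) * τ (star (ι a) * ι a) := hτ.star_mul_mul_le x (ι a)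
      _ = ((‖x‖ ^ 2 : ℝ) : ℂ) * τ (ι (star a * a)) := by rw [map_mul ι, map_star ι]
  have hsq := Complex.real_le_real.1 (le_of_mul_le_mul_right key hpos)
  exact (sq_le_sq₀ (norm_nonneg _) (norm_nonneg _)).1 hsq

end IsExpectation

theorem exists_contractive_left_inverse [FiniteDimensional ℂ C] [FiniteDimensional ℂ D]
    (hι : Function.Injective ι) :
    ∃ E : D →ₗ[ℂ] C, (∀ a, E (ι a) = a) ∧ ∀ x, ‖E x‖ ≤ ‖x‖ := by
  obtain ⟨E, hE⟩ := exists_isExpectation isFaithfulTrace_regularTrace hι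
  exact ⟨E, hE.apply_map isFaithfulTrace_regularTrace hι,
    hE.norm_apply_le isFaithfulTrace_regularTrace hι⟩

end Expectation

/-! ### Minimal projections and column families -/

section Projection

open scoped ComplexStarModule

variable {B : Type*} [CStarAlgebra B]

theorem exists_spectral_projection_mem (S : StarSubalgebra ℂ B) [FiniteDimensional ℂ S] {h : B}
    (hS : h ∈ S) (hsa : IsSelfAdjoint h) {μ : ℝ} (hμ : μ ∈ spectrum ℝ h) :
    ∃ p ∈ S, IsStarProjection p ∧ p ≠ 0 ∧ h * p = μ • p := by
  have hμS : μ ∈ spectrum ℝ (⟨h, hS⟩ : S) := by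
    rw [← spectrum.preimage_algebraMap ℂ, Set.mem_preimage, StarSubalgebra.spectrum_eq]
    exact spectrum.algebraMap_mem ℂ hμ
  obtain ⟨p, hp, hp0, hhp⟩ := exists_spectral_projection (h := (⟨h, hS⟩ : S)) (Subtype.ext hsa) hμS
  exact ⟨p, p.2, hp.map S.subtype, fun h0 ↦ hp0 (Subtype.ext h0), congrArg Subtype.val hhp⟩

theorem exists_proper_subprojection (S : StarSubalgebra ℂ B) [FiniteDimensional ℂ S] {e b : B}
    (heS : e ∈ S) (he : IsStarProjection e) (hb : b ∈ S) (h : e * b * e ∉ Submodule.span ℂ {e}) :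
    ∃ p ∈ S, IsStarProjection p ∧ p ≠ 0 ∧ e * p = p ∧ p ≠ e := by
  obtain ⟨k, hkS, hk, hke⟩ : ∃ k ∈ S, IsSelfAdjoint k ∧ e * k * e ∉ Submodule.span ℂ {e} := by
    by_contra! H
    let x : S := ⟨b, hb⟩
    have hre := H (ℜ x : S) (ℜ x : S).2 ((ℜ x).2.map S.subtype)
    have him := H (ℑ x : S) (ℑ x : S).2 ((ℑ x).2.map S.subtype)
    refine h ?_
    have hx : b = (ℜ x : S) + Complex.I • (ℑ x : S) :=
      (congrArg Subtype.val (realPart_add_I_smul_imaginaryPart x)).symm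
    rw [hx, mul_add, add_mul, mul_smul_comm, smul_mul_assoc]
    exact add_mem hre (Submodule.smul_mem _ _ him)
  have hsa : IsSelfAdjoint (e * k * e) := by
    simpa [he.isSelfAdjoint.star_eq] using hk.conjugate e
  have hne : e * k * e ≠ 0 := fun h0 ↦ hke (h0 ▸ zero_mem _)
  have : Nontrivial B := ⟨_, _, hne⟩
  obtain ⟨μ, hμ, hμ0⟩ : ∃ μ ∈ spectrum ℝ (e * k * e), μ ≠ 0 :=
    (CStarAlgebra.norm_or_neg_norm_mem_spectrum hsa).elim
      (⟨_, ·, norm_ne_zero_iff.2 hne⟩) (⟨_, ·, neg_ne_zero.2 (norm_ne_zero_iff.2 hne)⟩)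
  obtain ⟨p, hpS, hp, hp0, hhp⟩ :=
    exists_spectral_projection_mem S (mul_mem (mul_mem heS hkS) heS) hsa hμ
  have hep : e * p = p := by
    rw [← inv_smul_smul₀ hμ0 p, ← hhp, mul_smul_comm]
    simp only [← mul_assoc, he.isIdempotentElem.eq]
  refine ⟨p, hpS, hp, hp0, hep, fun hpe ↦ hke ?_⟩
  rw [hpe, mul_assoc, he.isIdempotentElem.eq] at hhp
  rw [hhp, ← Complex.coe_smul]
  exact Submodule.smul_mem _ _ (Submodule.mem_span_singleton_self e)

/-- `p` is a minimal projection of `S`: a nonzero projection whose corner `p S p` is reduced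
to the scalar multiples of `p`. -/
structure IsMinimalProjection (S : StarSubalgebra ℂ B) (p : B) : Prop where
  mem : p ∈ S
  isStarProjection : IsStarProjection p
  ne_zero : p ≠ 0
  corner : ∀ b ∈ S, p * b * p ∈ Submodule.span ℂ {p}

theorem exists_isMinimalProjection (S : StarSubalgebra ℂ B) [FiniteDimensional ℂ S] {e : B}
    (heS : e ∈ S) (he : IsStarProjection e) (he0 : e ≠ 0) :
    ∃ p, IsMinimalProjection S p ∧ e * p = p := by
  let M (p : B) : Submodule ℂ B :=
    LinearMap.range (LinearMap.mulLeft ℂ p ∘ₗ S.subtype.toLinearMap)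
  obtain ⟨p, ⟨hpS, hp, hp0, hep⟩, hmin⟩ := WellFounded.has_min
    (measure fun p : B ↦ Module.finrank ℂ (M p)).wf
    {p | p ∈ S ∧ IsStarProjection p ∧ p ≠ 0 ∧ e * p = p} ⟨e, heS, he, he0, he.isIdempotentElem⟩
  refine ⟨p, ⟨hpS, hp, hp0, ?_⟩, hep⟩
  by_contra! H
  obtain ⟨b, hb, hpbp⟩ := H
  obtain ⟨q, hqS, hq, hq0, hpq, hqp⟩ := exists_proper_subprojection S hpS hp hb hpbp
  refine hmin q ⟨hqS, hq, hq0, by rw [← hpq, ← mul_assoc, hep]⟩ ?_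
  refine Submodule.finrank_lt_finrank_of_lt (lt_of_le_of_ne ?_ fun heq ↦ hqp ?_)
  · rintro - ⟨y, rfl⟩
    exact ⟨⟨q, hqS⟩ * y, by simp [← mul_assoc, hpq]⟩
  · obtain ⟨y, hy⟩ : p ∈ M q := heq ▸ ⟨1, by simp⟩
    have hqp' : q * p = p := by rw [← hy]; simp [← mul_assoc, hq.isIdempotentElem.eq]
    have h := congrArg star hqp'
    rw [star_mul, hp.isSelfAdjoint.star_eq, hq.isSelfAdjoint.star_eq] at h
    exact hpq.symm.trans h

theorem exists_partial_isometry (S : StarSubalgebra ℂ B) [FiniteDimensional ℂ S] {x : B}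
    (hxS : x ∈ S) (hx : x ≠ 0) :
    ∃ q ∈ S, ∃ v ∈ S, IsStarProjection q ∧ q ≠ 0 ∧ star v * v = q ∧
      (∃ c, v = x * c) ∧ ∃ c, q = star x * c := by
  have : Nontrivial B := ⟨x, 0, hx⟩
  obtain ⟨q, hqS, hq, hq0, hxq⟩ := exists_spectral_projection_mem S (mul_mem (star_mem hxS) hxS)
    (IsSelfAdjoint.star_mul_self x) (norm_sq_mem_spectrum_star_mul_self x)
  have hnorm : ‖x‖ ≠ 0 := norm_ne_zero_iff.2 hx
  refine ⟨q, hqS, x * (‖x‖⁻¹ • q), mul_mem hxS ?_, hq, hq0, ?_, ⟨_, rfl⟩, (‖x‖ ^ 2)⁻¹ • (x * q), ?_⟩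
  · rw [← Complex.coe_smul]
    exact S.smul_mem hqS _
  · calc star (x * ‖x‖⁻¹ • q) * (x * ‖x‖⁻¹ • q) = ‖x‖⁻¹ • ‖x‖⁻¹ • (q * (star x * x * q)) := by
          simp [hq.isSelfAdjoint.star_eq, mul_assoc]
      _ = q := by
          rw [hxq, mul_smul_comm, hq.isIdempotentElem.eq, smul_smul, smul_smul, ← mul_inv, ← sq,
            inv_mul_cancel₀ (pow_ne_zero 2 hnorm), one_smul]
  · rw [mul_smul_comm, ← mul_assoc, hxq, inv_smul_smul₀ (pow_ne_zero 2 hnorm)]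

variable [IsSimpleRing B] {F : ℕ → StarSubalgebra ℂ B}

theorem exists_orthogonal_partial_isometry (hF : IsUnitalAFPresentation F)
    (hinf : ¬ FiniteDimensional ℂ B) {n : ℕ} {e : B} (heF : e ∈ F n) (he : IsStarProjection e)
    (he0 : e ≠ 0) :
    ∃ N ≥ n, ∃ q ∈ F N, ∃ v ∈ F N, IsStarProjection q ∧ q ≠ 0 ∧ star v * v = q ∧
      e * q = q ∧ e * v = v ∧ q * v = 0 := by
  obtain ⟨b, hb⟩ : ∃ b, e * b * e ∉ Submodule.span ℂ {e} := by
    by_contra! H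
    exact hinf (finite_of_corner_subset_span ℂ he0 H)
  have hopen : IsOpen {b | e * b * e ∉ Submodule.span ℂ {e}} :=
    (Submodule.closed_of_finiteDimensional (Submodule.span ℂ {e})).isOpen_compl.preimage
      (by fun_prop : Continuous fun b ↦ e * b * e)
  obtain ⟨N, hN, b, hbF, hb⟩ := hF.exists_mem_of_isOpen hopen ⟨b, hb⟩ n
  have := hF.finiteDimensional N
  obtain ⟨p, hpF, hp, hp0, hep, hpe⟩ :=
    exists_proper_subprojection (F N) (hF.monotone hN heF) he hbF hb
  have hpe' : p * e = p := by
    simpa [hp.isSelfAdjoint.star_eq, he.isSelfAdjoint.star_eq] using congrArg star hep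
  obtain ⟨c, hc⟩ := exists_mul_mul_ne_zero (sub_ne_zero.2 hpe.symm) hp0
  obtain ⟨M, hM, c, hcF, hc⟩ := hF.exists_mem_of_isOpen
    (isOpen_ne.preimage (by fun_prop : Continuous fun c ↦ (e - p) * c * p)) ⟨c, hc⟩ N
  have := hF.finiteDimensional M
  have heM := hF.monotone (hN.trans hM) heF
  have hpM := hF.monotone hM hpF
  obtain ⟨q, hqF, v, hvF, hq, hq0, hvq, ⟨y, hy⟩, z, hz⟩ := exists_partial_isometry (F M)
    (mul_mem (mul_mem (sub_mem heM hpM) hcF) hpM) hc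
  have hpq : p * q = q := by
    rw [hz]
    simp [hp.isSelfAdjoint.star_eq, ← mul_assoc, hp.isIdempotentElem.eq]
  have hqp : q * p = q := by
    simpa [hp.isSelfAdjoint.star_eq, hq.isSelfAdjoint.star_eq] using congrArg star hpq
  have hzero : q * (e - p) = 0 := by
    rw [← hqp, mul_assoc, mul_sub, hpe', hp.isIdempotentElem.eq, sub_self, mul_zero]
  refine ⟨M, hN.trans hM, q, hqF, v, hvF, hq, hq0, hvq, ?_, ?_, ?_⟩
  · rw [← hpq, ← mul_assoc, hep]
  · simp only [hy, ← mul_assoc, mul_sub, he.isIdempotentElem.eq, hep]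
  · simp only [hy, ← mul_assoc, hzero, zero_mul]

theorem exists_orthogonal_columns (hF : IsUnitalAFPresentation F)
    (hinf : ¬ FiniteDimensional ℂ B) (L : ℕ) {n : ℕ} {e : B} (heF : e ∈ F n)
    (he : IsStarProjection e) (he0 : e ≠ 0) :
    ∃ N ≥ n, ∃ r, IsMinimalProjection (F N) r ∧ e * r = r ∧
      ∃ f : Fin L → B, (∀ i, f i ∈ F N) ∧ (∀ i, e * f i = f i) ∧
        ∀ i j, star (f i) * f j = if i = j then r else 0 := by
  induction L generalizing n e with
  | zero =>
    have := hF.finiteDimensional n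
    obtain ⟨r, hr, her⟩ := exists_isMinimalProjection (F n) heF he he0
    exact ⟨n, le_rfl, r, hr, her, finZeroElim, by simp⟩
  | succ L ih =>
    obtain ⟨N, hN, q, hqF, v, hvF, hq, hq0, hvq, heq, hev, hqv⟩ :=
      exists_orthogonal_partial_isometry hF hinf heF he he0
    obtain ⟨M, hM, r, hr, hqr, g, hgF, hqg, hg⟩ := ih hqF hq hq0
    have hvr : star (v * r) * (v * r) = r := by
      rw [star_mul, hr.isStarProjection.isSelfAdjoint.star_eq, mul_assoc, ← mul_assoc (star v), hvq,
        hqr, hr.isStarProjection.isIdempotentElem.eq]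
    have hgv (i : Fin L) : star (g i) * (v * r) = 0 := by
      rw [← hqg i, star_mul, hq.isSelfAdjoint.star_eq, mul_assoc, ← mul_assoc q, hqv, zero_mul,
        mul_zero]
    have hvg (i : Fin L) : star (v * r) * g i = 0 := by simpa using congrArg star (hgv i)
    have hevr : e * (v * r) = v * r := by rw [← mul_assoc, hev]
    have heg (i : Fin L) : e * g i = g i := by rw [← hqg i, ← mul_assoc, heq]
    refine ⟨M, hN.trans hM, r, hr, by rw [← hqr, ← mul_assoc, heq], Fin.cons (v * r) g,
      Fin.cases (mul_mem (hF.monotone hM hvF) hr.mem) hgF, Fin.cases hevr heg, ?_⟩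
    refine Fin.cases (Fin.cases ?_ fun j ↦ ?_) fun i ↦ Fin.cases ?_ fun j ↦ ?_
    · simpa using hvr
    · simpa [(Fin.succ_ne_zero j).symm] using hvg j
    · simpa using hgv i
    · simpa using hg i j

end Projection

/-! ### Column embeddings -/

section Column

/-- `U` embeds the pre-Hilbert space `D` with `⟪x, y⟫ = τ (star x * y)` into the right Hilbert
module `B e` over the scalar multiples of the projection `e`. It transports the left regular
representation of `D` to a `*`-representation of `D` by elements of `B`. -/
structure IsColumnEmbedding {B D : Type*} [CStarAlgebra B] [Ring D] [StarRing D] [Algebra ℂ D]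
    (τ : D →ₗ[ℂ] ℂ) (e : B) (U : D →ₗ[ℂ] B) : Prop where
  isStarProjection : IsStarProjection e
  ne_zero : e ≠ 0
  star_apply_mul : ∀ x y, star (U x) * U y = τ (star x * y) • e

/-- The element of `B` acting on the column `U` as left multiplication by `a`, built from an
orthonormal basis `m`. -/
noncomputable def columnAction {B D κ : Type*} [CStarAlgebra B] [Ring D] [Algebra ℂ D] [Fintype κ]
    (U : D →ₗ[ℂ] B) (m : κ → D) (a : D) : B :=
  ∑ j, U (a * m j) * star (U (m j))

theorem mul_columnAction {B D κ : Type*} [CStarAlgebra B] [Ring D] [Algebra ℂ D] [Fintype κ]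
    {U : D →ₗ[ℂ] B} {a : D} {t : B} (h : ∀ x, t * U x = U (a * x)) (m : κ → D) (b : D) :
    t * columnAction U m b = columnAction U m (a * b) := by
  simp only [columnAction, Finset.mul_sum, ← mul_assoc, h]

theorem columnAction_mem {B D κ : Type*} [CStarAlgebra B] [Ring D] [Algebra ℂ D] [Fintype κ]
    {U : D →ₗ[ℂ] B} {S : StarSubalgebra ℂ B} (hU : ∀ x, U x ∈ S) (m : κ → D) (a : D) :
    columnAction U m a ∈ S :=
  sum_mem fun _ _ ↦ mul_mem (hU _) (star_mem (hU _))

variable {B D : Type*} [CStarAlgebra B] [Ring D] [StarRing D] [Algebra ℂ D]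
  {κ : Type*} [Fintype κ] [DecidableEq κ] {τ : D →ₗ[ℂ] ℂ} {m : κ → D} {e : B} {U : D →ₗ[ℂ] B}

namespace IsColumnEmbedding

theorem apply_mul (hU : IsColumnEmbedding τ e U) (x : D) : U x * e = U x := by
  have he := hU.isStarProjection
  refine sub_eq_zero.1 ((CStarRing.star_mul_self_eq_zero_iff _).1 ?_)
  calc star (U x * e - U x) * (U x * e - U x)
      = e * (star (U x) * U x) * e - e * (star (U x) * U x) - star (U x) * U x * e +
          star (U x) * U x := by
        rw [star_sub, star_mul, he.isSelfAdjoint.star_eq]; noncomm_ring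
    _ = 0 := by
        rw [hU.star_apply_mul]; simp [he.isIdempotentElem.eq]

theorem mul_star_apply (hU : IsColumnEmbedding τ e U) (x : D) : e * star (U x) = star (U x) := by
  have h := congrArg star (hU.apply_mul x)
  rwa [star_mul, hU.isStarProjection.isSelfAdjoint.star_eq] at h

theorem columnAction_mul_apply (hU : IsColumnEmbedding τ e U) (hm : IsTraceBasis τ m) (a x : D) :
    columnAction U m a * U x = U (a * x) := by
  calc columnAction U m a * U x = ∑ j, U (a * τ (star (m j) * x) • m j) := by
        simp [columnAction, Finset.sum_mul, mul_assoc, hU.star_apply_mul, hU.apply_mul]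
    _ = U (a * x) := by
        rw [← map_sum, ← Finset.mul_sum, hm.sum_smul]

theorem columnAction_mul (hU : IsColumnEmbedding τ e U) (hm : IsTraceBasis τ m) (a b : D) :
    columnAction U m (a * b) = columnAction U m a * columnAction U m b :=
  (mul_columnAction (hU.columnAction_mul_apply hm a) m b).symm

theorem columnAction_star (hU : IsColumnEmbedding τ e U) (hm : IsTraceBasis τ m) (a : D) :
    columnAction U m (star a) = star (columnAction U m a) := by
  have hone : star (columnAction U m 1) = columnAction U m 1 := by
    simp [columnAction]
  have happly (x : D) : star (columnAction U m a) * U x = U (star a * x) := by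
    calc star (columnAction U m a) * U x = ∑ j, U (τ (star (m j) * (star a * x)) • m j) := by
          simp [columnAction, Finset.sum_mul, mul_assoc, hU.star_apply_mul, hU.apply_mul]
      _ = U (star a * x) := by rw [← map_sum, hm.sum_smul]
  calc columnAction U m (star a)
      = star (columnAction U m a) * columnAction U m 1 := by
        rw [mul_columnAction happly, mul_one]
    _ = star (columnAction U m 1 * columnAction U m a) := by rw [star_mul, hone]
    _ = star (columnAction U m a) := by rw [← hU.columnAction_mul hm, one_mul]

theorem eq_zero_of_columnAction_eq_zero (hU : IsColumnEmbedding τ e U) (hτ : IsFaithfulTrace τ)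
    (hm : IsTraceBasis τ m) {a : D} (ha : columnAction U m a = 0) : a = 0 := by
  have h := hU.columnAction_mul_apply hm a 1
  rw [ha, zero_mul, mul_one] at h
  have h' := hU.star_apply_mul a a
  rw [← h, mul_zero] at h'
  exact hτ.eq_zero a ((smul_eq_zero.1 h'.symm).resolve_right hU.ne_zero)

/-- The non-unital `*`-representation `columnAction U m` of `D` in `B`; its unit is the
projection onto the column. -/
noncomputable def representation (hU : IsColumnEmbedding τ e U) (hm : IsTraceBasis τ m) :
    D →⋆ₙₐ[ℂ] B where
  toFun := columnAction U m
  map_smul' c a := by simp [columnAction, Finset.smul_sum]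
  map_zero' := by simp [columnAction]
  map_add' a b := by simp [columnAction, add_mul, Finset.sum_add_distrib]
  map_mul' := hU.columnAction_mul hm
  map_star' := hU.columnAction_star hm

theorem columnAction_one_mul_mul (hU : IsColumnEmbedding τ e U) (hm : IsTraceBasis τ m) {b : B}
    {z : D} (h : ∀ x y, star (U x) * b * U y = τ (star x * (z * y)) • e) :
    columnAction U m 1 * b * columnAction U m 1 = columnAction U m z := by
  calc columnAction U m 1 * b * columnAction U m 1
      = ∑ i, ∑ j, U (m i) * (star (U (m i)) * b * U (m j)) * star (U (m j)) := by
        simp only [columnAction, one_mul, Finset.sum_mul, Finset.mul_sum, mul_assoc]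
        exact Finset.sum_comm
    _ = ∑ j, U (∑ i, τ (star (m i) * (z * m j)) • m i) * star (U (m j)) := by
        rw [Finset.sum_comm]
        simp only [h, mul_smul_comm, smul_mul_assoc, hU.apply_mul, map_sum, map_smul,
          Finset.sum_mul]
    _ = columnAction U m z := by simp only [hm.sum_smul, columnAction]

end IsColumnEmbedding

theorem exists_isColumnEmbedding [StarModule ℂ D] [FiniteDimensional ℂ D] [IsSimpleRing B]
    {F : ℕ → StarSubalgebra ℂ B} (hF : IsUnitalAFPresentation F) (hinf : ¬ FiniteDimensional ℂ B)
    (hτ : IsFaithfulTrace τ) {n : ℕ} (heF : e ∈ F n) (he : IsStarProjection e) (he0 : e ≠ 0) :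
    ∃ N ≥ n, ∃ r, IsMinimalProjection (F N) r ∧ ∃ J : D →ₗ[ℂ] B, IsColumnEmbedding τ r J ∧
      (∀ x, J x ∈ F N) ∧ ∀ x, e * J x = J x := by
  obtain ⟨m, hm⟩ := hτ.exists_isTraceBasis
  obtain ⟨N, hN, r, hr, -, f, hfF, hef, hf⟩ :=
    exists_orthogonal_columns hF hinf (Module.finrank ℂ D) heF he he0
  let J : D →ₗ[ℂ] B := ∑ i, (τ ∘ₗ LinearMap.mulLeft ℂ (star (m i))).smulRight (f i)
  have hJ (x : D) : J x = ∑ i, τ (star (m i) * x) • f i := by simp [J]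
  refine ⟨N, hN, r, hr, J, ⟨hr.isStarProjection, hr.ne_zero, fun x y ↦ ?_⟩, fun x ↦ ?_, fun x ↦ ?_⟩
  · calc star (J x) * J y
        = (∑ i, τ (star (m i) * y) * τ (star x * m i)) • r := by
          simp [hJ, Finset.sum_mul, Finset.mul_sum, hf, Finset.sum_smul, smul_smul, ← hτ.map_star]
      _ = τ (star x * y) • r := by
          conv_rhs => rw [← hm.sum_smul y, Finset.mul_sum, map_sum]
          simp
  · exact hJ x ▸ sum_mem fun i _ ↦ (F N).smul_mem (hfF i) _
  · simp only [hJ, Finset.mul_sum, mul_smul_comm, hef]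

end Column

/-! ### Towers of compressions -/

section ColumnComp

variable {B D D' : Type*} [CStarAlgebra B] [Ring D] [StarRing D] [Algebra ℂ D] [Ring D']
  [StarRing D'] [Algebra ℂ D'] {κ : Type*} [Fintype κ]

/-- The column obtained by substituting the column `J` of `D'` into each basis entry of the column
`U` of `D`, along `ι : D → D'`. It intertwines the two left actions of `D`. -/
noncomputable def columnComp (U : D →ₗ[ℂ] B) (m : κ → D) (ι : D →⋆ₐ[ℂ] D') (J : D' →ₗ[ℂ] B) :
    D' →ₗ[ℂ] B :=
  ∑ i, LinearMap.mulLeft ℂ (U (m i)) ∘ₗ J ∘ₗ LinearMap.mulLeft ℂ (star (ι (m i)))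

variable {U : D →ₗ[ℂ] B} {m : κ → D} {ι : D →⋆ₐ[ℂ] D'} {J : D' →ₗ[ℂ] B}

theorem columnComp_apply (x : D') :
    columnComp U m ι J x = ∑ i, U (m i) * J (star (ι (m i)) * x) := by
  simp [columnComp]

variable {e e' : B} {τ : D →ₗ[ℂ] ℂ} {τ' : D' →ₗ[ℂ] ℂ}

namespace IsColumnEmbedding

theorem star_columnComp_mul_mul (hJ : IsColumnEmbedding τ' e' J) (heJ : ∀ x, e * J x = J x)
    {b : B} {β : κ → κ → ℂ} (hβ : ∀ i j, star (U (m i)) * b * U (m j) = β i j • e) (x y : D') :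
    star (columnComp U m ι J x) * b * columnComp U m ι J y =
      τ' (star x * (ι (∑ i, ∑ j, β i j • (m i * star (m j))) * y)) • e' := by
  calc star (columnComp U m ι J x) * b * columnComp U m ι J y
      = ∑ i, ∑ j, star (J (star (ι (m i)) * x)) * (star (U (m i)) * b * U (m j)) *
          J (star (ι (m j)) * y) := by
        simp only [columnComp_apply, star_sum, star_mul, Finset.sum_mul, Finset.mul_sum, mul_assoc]
        exact Finset.sum_comm
    _ = ∑ i, ∑ j, β i j • τ' (star x * (ι (m i * star (m j)) * y)) • e' := by
        simp only [hβ, mul_smul_comm, smul_mul_assoc, mul_assoc, heJ, hJ.star_apply_mul, star_mul,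
          star_star, map_mul ι, map_star ι]
    _ = τ' (star x * (ι (∑ i, ∑ j, β i j • (m i * star (m j))) * y)) • e' := by
        simp only [map_sum, map_smul, Finset.sum_mul, Finset.mul_sum, smul_mul_assoc,
          mul_smul_comm, Finset.sum_smul, smul_assoc]

variable [DecidableEq κ]

theorem comp (hU : IsColumnEmbedding τ e U) (hm : IsTraceBasis τ m)
    (hone : ∑ i, m i * star (m i) = 1) (hJ : IsColumnEmbedding τ' e' J)
    (heJ : ∀ x, e * J x = J x) : IsColumnEmbedding τ' e' (columnComp U m ι J) where
  isStarProjection := hJ.isStarProjection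
  ne_zero := hJ.ne_zero
  star_apply_mul x y := by
    have hβ (i j : κ) : star (U (m i)) * 1 * U (m j) = (if i = j then (1 : ℂ) else 0) • e := by
      rw [mul_one, hU.star_apply_mul, hm.orthonormal]
    simpa [hone] using hJ.star_columnComp_mul_mul (ι := ι) heJ hβ x y

theorem columnAction_mul_columnComp [StarModule ℂ D] (hU : IsColumnEmbedding τ e U)
    (hτ : IsFaithfulTrace τ) (hm : IsTraceBasis τ m) (a : D) (x : D') :
    columnAction U m a * columnComp U m ι J x = columnComp U m ι J (ι a * x) := by
  calc columnAction U m a * columnComp U m ι J x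
      = ∑ i, U (∑ k, τ (star (m k) * (a * m i)) • m k) * J (star (ι (m i)) * x) := by
        simp only [columnComp_apply, Finset.mul_sum, ← mul_assoc, hU.columnAction_mul_apply hm]
        simp only [mul_assoc, hm.sum_smul]
    _ = ∑ k, U (m k) * J (ι (∑ i, τ (star (m k) * a * m i) • star (m i)) * x) := by
        simp only [map_sum, map_smul, map_star ι, Finset.sum_mul, Finset.mul_sum, smul_mul_assoc,
          mul_smul_comm, mul_assoc]
        exact Finset.sum_comm
    _ = columnComp U m ι J (ι a * x) := by
        simp only [hm.sum_smul_star hτ]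
        simp only [columnComp_apply, map_mul ι, map_star ι, mul_assoc]

theorem exists_star_mul_mul_eq_smul (hU : IsColumnEmbedding τ e U) {S : StarSubalgebra ℂ B}
    (he : IsMinimalProjection S e) (hUS : ∀ x, U x ∈ S) {b : B} (hb : b ∈ S) (x y : D) :
    ∃ c : ℂ, star (U x) * b * U y = c • e := by
  obtain ⟨c, hc⟩ := Submodule.mem_span_singleton.1
    (he.corner _ (mul_mem (mul_mem (star_mem (hUS x)) hb) (hUS y)))
  refine ⟨c, ?_⟩
  rw [hc, ← mul_assoc, ← mul_assoc, hU.mul_star_apply, mul_assoc _ (U y), hU.apply_mul]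

end IsColumnEmbedding

end ColumnComp

section Tower

variable {A B : Type*} [CStarAlgebra A] [CStarAlgebra B] {S : ℕ → StarSubalgebra ℂ A}
  {F : ℕ → StarSubalgebra ℂ B}

/-- Non-unital representations `s k` of the stages of `A` by elements of the stages `F (N k)` of
`B`, with units `q k = s k 1`, such that `q (k + 1)` reduces `s k` to `s (k + 1)` and compresses
all of `F (N k)` into the image of `s (k + 1)`. -/
structure IsCompressionTower (F : ℕ → StarSubalgebra ℂ B) (hS : Monotone S) (N : ℕ → ℕ)
    (s : ∀ k, S k →⋆ₙₐ[ℂ] B) : Prop where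
  strictMono : StrictMono N
  injective : ∀ k, Function.Injective (s k)
  mem : ∀ k a, s k a ∈ F (N k)
  apply_mul_one : ∀ k a, s k a * s (k + 1) 1 =
    s (k + 1) (StarSubalgebra.inclusion (hS k.le_succ) a)
  compress : ∀ k, ∀ b ∈ F (N k), ∃ z : S k, s (k + 1) 1 * b * s (k + 1) 1 =
    s (k + 1) (StarSubalgebra.inclusion (hS k.le_succ) z)

/-- One level of a compression tower, before its representation is extracted: a column embedding
of `D` inside one stage of `F`, over a minimal projection of that stage. -/
structure Column (F : ℕ → StarSubalgebra ℂ B) (D : Type*) [CStarAlgebra D] where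
  stage : ℕ
  projection : B
  toLinearMap : D →ₗ[ℂ] B
  isMinimalProjection : IsMinimalProjection (F stage) projection
  isColumnEmbedding : IsColumnEmbedding (regularTrace D) projection toLinearMap
  mem : ∀ x, toLinearMap x ∈ F stage

variable {D D' : Type*} [CStarAlgebra D] [CStarAlgebra D']

/-- The representation of `D` carried by a column, for a fixed choice of orthonormal basis. -/
noncomputable def Column.representation [FiniteDimensional ℂ D] (c : Column F D) : D →⋆ₙₐ[ℂ] B :=
  c.isColumnEmbedding.representation (isTraceBasis_regularBasis D)

theorem Column.injective_representation [FiniteDimensional ℂ D] (c : Column F D) :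
    Function.Injective c.representation :=
  (injective_iff_map_eq_zero _).2 fun _ ↦ c.isColumnEmbedding.eq_zero_of_columnAction_eq_zero
    isFaithfulTrace_regularTrace (isTraceBasis_regularBasis D)

variable [IsSimpleRing B] (hF : IsUnitalAFPresentation F) (hinf : ¬ FiniteDimensional ℂ B)
include hF hinf

theorem nonempty_column (D : Type*) [CStarAlgebra D] [FiniteDimensional ℂ D] :
    Nonempty (Column F D) := by
  obtain ⟨N, -, e, he, U, hU, hUF, -⟩ := exists_isColumnEmbedding hF hinf
    (isFaithfulTrace_regularTrace (D := D)) (one_mem (F 0)) (.one B) one_ne_zero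
  exact ⟨N, e, U, he, hU, hUF⟩

theorem Column.exists_next [FiniteDimensional ℂ D] [FiniteDimensional ℂ D'] (ι : D →⋆ₐ[ℂ] D')
    (c : Column F D) : ∃ c' : Column F D', c.stage < c'.stage ∧
      (∀ a, c.representation a * c'.representation 1 = c'.representation (ι a)) ∧
      ∀ b ∈ F c.stage, ∃ z, c'.representation 1 * b * c'.representation 1 =
        c'.representation (ι z) := by
  have hmin := c.isMinimalProjection
  have hm := isTraceBasis_regularBasis D
  have hτ := isFaithfulTrace_regularTrace (D := D)
  obtain ⟨N', hN', e', he', J, hJ, hJF, heJ⟩ := exists_isColumnEmbedding hF hinf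
    (isFaithfulTrace_regularTrace (D := D')) (hF.monotone c.stage.le_succ hmin.mem)
    hmin.isStarProjection hmin.ne_zero
  have hU' := c.isColumnEmbedding.comp (ι := ι) hm hm.sum_mul_star hJ heJ
  have hUF' (x : D') : columnComp c.toLinearMap (regularBasis D) ι J x ∈ F N' := by
    rw [columnComp_apply]
    exact sum_mem fun i _ ↦ mul_mem (hF.monotone (c.stage.le_succ.trans hN') (c.mem _)) (hJF _)
  refine ⟨⟨N', e', _, he', hU', hUF'⟩, hN', fun a ↦ ?_, fun b hb ↦ ?_⟩
  · have h := mul_columnAction (c.isColumnEmbedding.columnAction_mul_columnComp (ι := ι) (J := J)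
      hτ hm a) (regularBasis D') 1
    rwa [mul_one] at h
  · choose β hβ using fun i j ↦ c.isColumnEmbedding.exists_star_mul_mul_eq_smul hmin c.mem hb
      (regularBasis D i) (regularBasis D j)
    exact ⟨_, hU'.columnAction_one_mul_mul (isTraceBasis_regularBasis D')
      (hJ.star_columnComp_mul_mul heJ hβ)⟩

theorem exists_isCompressionTower (hS : IsUnitalAFPresentation S) :
    ∃ (N : ℕ → ℕ) (s : ∀ k, S k →⋆ₙₐ[ℂ] B), IsCompressionTower F hS.monotone N s := by
  have := hS.finiteDimensional
  obtain ⟨c₀⟩ := nonempty_column hF hinf (S 0)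
  choose next hlt hmul hcomp using fun k : ℕ ↦
    Column.exists_next hF hinf (StarSubalgebra.inclusion (hS.monotone k.le_succ))
  let c (k : ℕ) : Column F (S k) := Nat.rec c₀ next k
  exact ⟨fun k ↦ (c k).stage, fun k ↦ (c k).representation,
    { strictMono := strictMono_nat_of_lt_succ fun k ↦ hlt k (c k)
      injective := fun k ↦ (c k).injective_representation
      mem := fun k ↦ columnAction_mem (c k).mem (regularBasis (S k))
      apply_mul_one := fun k ↦ hmul k (c k)
      compress := fun k ↦ hcomp k (c k) }⟩

end Tower

/-! ### The complemented embedding -/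

theorem exists_continuousLinearMap_extending {𝕜 V W : Type*} [NontriviallyNormedField 𝕜]
    [NormedAddCommGroup V] [NormedSpace 𝕜 V] [NormedAddCommGroup W] [NormedSpace 𝕜 W]
    [CompleteSpace W] {M : ℕ → Submodule 𝕜 V} (hM : Monotone M)
    (hdense : Dense (⋃ n, (M n : Set V))) (g : ∀ n, M n →ₗ[𝕜] W)
    (hcompat : ∀ n x, g (n + 1) (Submodule.inclusion (hM n.le_succ) x) = g n x)
    (hnorm : ∀ n x, ‖g n x‖ ≤ ‖x‖) : ∃ G : V →L[𝕜] W, ∀ n (x : M n), G x = g n x := by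
  let p (n : ℕ) : V →ₗ.[𝕜] W := ⟨M n, g n⟩
  have hp : Monotone p := monotone_nat_of_le_succ fun n ↦ ⟨hM n.le_succ, fun x y hxy ↦
    (hcompat n x).symm.trans (congrArg (g (n + 1)) (Subtype.ext hxy))⟩
  have hdir : DirectedOn (· ≤ ·) (Set.range p) := hp.directed_le.directedOn_range
  let T : V →ₗ.[𝕜] W := LinearPMap.sSup (Set.range p) hdir
  have hT (n : ℕ) : p n ≤ T := LinearPMap.le_sSup hdir ⟨n, rfl⟩
  have hTdense : DenseRange T.domain.subtype :=
    hdense.mono <| Set.iUnion_subset fun n x hx ↦ ⟨⟨x, (hT n).1 hx⟩, rfl⟩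
  have hTnorm (x : T.domain) : ‖T.toFun x‖ ≤ 1 * ‖T.domain.subtype x‖ := by
    obtain ⟨_, ⟨n, rfl⟩, hx⟩ :=
      (LinearPMap.mem_domain_sSup_iff (Set.range_nonempty p) hdir).1 x.2
    rw [one_mul]
    exact (congrArg norm ((hT n).2 (x := ⟨x, hx⟩) (y := x) rfl)).ge.trans (hnorm n ⟨x, hx⟩)
  refine ⟨T.toFun.extendOfNorm T.domain.subtype, fun n x ↦ ?_⟩
  exact (LinearMap.extendOfNorm_eq hTdense ⟨1, hTnorm⟩ ⟨x, (hT n).1 x.2⟩).trans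
    ((hT n).2 (x := x) rfl).symm

theorem norm_add_eq_max {B : Type*} [NonUnitalCStarAlgebra B] {y z : B} (h₁ : star y * z = 0)
    (h₂ : y * star z = 0) : ‖y + z‖ = max ‖y‖ ‖z‖ := by
  have h₁' : star z * y = 0 := by simpa using congrArg star h₁
  have hyz : (star y * y) * (star z * z) = 0 := by
    rw [mul_assoc, ← mul_assoc y, h₂, zero_mul, mul_zero]
  have hsq : ‖y + z‖ * ‖y + z‖ = max ‖y‖ ‖z‖ * max ‖y‖ ‖z‖ := by
    rw [← CStarRing.norm_star_mul_self, star_add, add_mul, mul_add, mul_add, h₁, h₁', add_zero,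
      zero_add, IsSelfAdjoint.norm_add_eq_max (.star_mul_self y) (.star_mul_self z) hyz,
      CStarRing.norm_star_mul_self, CStarRing.norm_star_mul_self]
    rcases le_total ‖y‖ ‖z‖ with h | h
    · rw [max_eq_right h, max_eq_right (mul_self_le_mul_self (norm_nonneg y) h)]
    · rw [max_eq_left h, max_eq_left (mul_self_le_mul_self (norm_nonneg z) h)]
  exact (mul_self_inj (norm_nonneg _) ((norm_nonneg y).trans (le_max_left _ _))).1 hsq

section Embedding

variable {A B : Type*} [CStarAlgebra A] [CStarAlgebra B] {S : ℕ → StarSubalgebra ℂ A}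
  {F : ℕ → StarSubalgebra ℂ B} {hS : Monotone S} {N : ℕ → ℕ} {s : ∀ k, S k →⋆ₙₐ[ℂ] B}

/-- The embeddings of the stages of `A` determined by a compression tower `s` with units
`q k = s k 1` and retractions `E k` of the inclusions: `φ (k + 1)` extends `φ k` by following `E k`
off the range of `q (k + 1)` and using `s (k + 1)` on it. -/
noncomputable def stageEmbedding (s : ∀ k, S k →⋆ₙₐ[ℂ] B) (E : ∀ k, S (k + 1) →ₗ[ℂ] S k) :
    ∀ k, S k →ₗ[ℂ] B
  | 0 => s 0
  | k + 1 => LinearMap.mulLeft ℂ (1 - s (k + 1) 1) ∘ₗ stageEmbedding s E k ∘ₗ E k + s (k + 1)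

theorem stageEmbedding_succ_apply (E : ∀ k, S (k + 1) →ₗ[ℂ] S k) (k : ℕ) (a : S (k + 1)) :
    stageEmbedding s E (k + 1) a =
      (1 - s (k + 1) 1) * stageEmbedding s E k (E k a) + s (k + 1) a :=
  rfl

theorem isStarProjection_apply_one (s : ∀ k, S k →⋆ₙₐ[ℂ] B) (k : ℕ) :
    IsStarProjection (s k 1) :=
  (IsStarProjection.one (S k)).map (s k)

theorem one_mul_stageEmbedding (E : ∀ k, S (k + 1) →ₗ[ℂ] S k) (k : ℕ) (a : S k) :
    s k 1 * stageEmbedding s E k a = s k a := by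
  cases k with
  | zero => exact (map_mul (s 0) 1 a).symm.trans (by rw [one_mul])
  | succ k =>
    rw [stageEmbedding_succ_apply, mul_add, ← mul_assoc,
      (isStarProjection_apply_one s _).mul_one_sub_self, zero_mul, zero_add, ← map_mul, one_mul]

namespace IsCompressionTower

variable (h : IsCompressionTower F hS N s)
include h

theorem apply_one_mul (k : ℕ) (a : S k) :
    s (k + 1) 1 * s k a = s (k + 1) (StarSubalgebra.inclusion (hS k.le_succ) a) := by
  have := congrArg star (h.apply_mul_one k (star a))
  rwa [star_mul, (isStarProjection_apply_one s _).isSelfAdjoint.star_eq, map_star (s k), star_star,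
    map_star (StarSubalgebra.inclusion _), map_star (s (k + 1)), star_star] at this

theorem one_mul_one (k : ℕ) : s k 1 * s (k + 1) 1 = s (k + 1) 1 :=
  (h.apply_mul_one k 1).trans (congrArg _ (map_one (StarSubalgebra.inclusion (hS k.le_succ))))

theorem one_mul_one' (k : ℕ) : s (k + 1) 1 * s k 1 = s (k + 1) 1 :=
  (h.apply_one_mul k 1).trans (congrArg _ (map_one (StarSubalgebra.inclusion (hS k.le_succ))))

theorem mul_one_succ {k : ℕ} {x : B} {a : S k} (hx : x * s k 1 = s k a) :
    x * s (k + 1) 1 = s (k + 1) (StarSubalgebra.inclusion (hS k.le_succ) a) := by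
  rw [← h.one_mul_one, ← mul_assoc, hx, h.apply_mul_one]

theorem one_succ_mul {k : ℕ} {x : B} {a : S k} (hx : s k 1 * x = s k a) :
    s (k + 1) 1 * x = s (k + 1) (StarSubalgebra.inclusion (hS k.le_succ) a) := by
  rw [← h.one_mul_one', mul_assoc, hx, h.apply_one_mul]

theorem stageEmbedding_mul_one (E : ∀ k, S (k + 1) →ₗ[ℂ] S k) (k : ℕ) (a : S k) :
    stageEmbedding s E k a * s k 1 = s k a := by
  induction k with
  | zero => exact (map_mul (s 0) a 1).symm.trans (by rw [mul_one])
  | succ k ih =>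
    rw [stageEmbedding_succ_apply, add_mul, mul_assoc, h.mul_one_succ (ih (E k a)), sub_mul,
      one_mul, ← map_mul, one_mul, sub_self, zero_add, ← map_mul, mul_one]

theorem stageEmbedding_inclusion {E : ∀ k, S (k + 1) →ₗ[ℂ] S k}
    (hE : ∀ k a, E k (StarSubalgebra.inclusion (hS k.le_succ) a) = a) (k : ℕ) (a : S k) :
    stageEmbedding s E (k + 1) (StarSubalgebra.inclusion (hS k.le_succ) a) =
      stageEmbedding s E k a := by
  rw [stageEmbedding_succ_apply, hE, sub_mul, one_mul,
    h.one_succ_mul (one_mul_stageEmbedding E k a), sub_add_cancel]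

theorem stageEmbedding_mem (hF : Monotone F) (E : ∀ k, S (k + 1) →ₗ[ℂ] S k) (k : ℕ) (a : S k) :
    stageEmbedding s E k a ∈ F (N k) := by
  induction k with
  | zero => exact h.mem 0 a
  | succ k ih =>
    have hle : F (N k) ≤ F (N (k + 1)) := hF (h.strictMono.monotone k.le_succ)
    exact add_mem (mul_mem (sub_mem (one_mem _) (h.mem _ _)) (hle (ih _))) (h.mem _ _)

theorem norm_stageEmbedding_le {E : ∀ k, S (k + 1) →ₗ[ℂ] S k} [∀ k, FiniteDimensional ℂ (S k)]
    (hE : ∀ k a, ‖E k a‖ ≤ ‖a‖) (k : ℕ) (a : S k) : ‖stageEmbedding s E k a‖ ≤ ‖a‖ := by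
  induction k with
  | zero => exact NonUnitalStarAlgHom.norm_apply_le (s 0) a
  | succ k ih =>
    set q := s (k + 1) 1
    have hq : IsStarProjection q := isStarProjection_apply_one s (k + 1)
    set y := stageEmbedding s E k (E k a)
    have hy : ‖(1 - q) * y‖ ≤ ‖a‖ :=
      calc ‖(1 - q) * y‖ ≤ ‖1 - q‖ * ‖y‖ := norm_mul_le _ _
        _ ≤ 1 * ‖a‖ := by gcongr; exacts [hq.one_sub.norm_le, (ih _).trans (hE k a)]
        _ = ‖a‖ := one_mul _
    have hqs : q * s (k + 1) a = s (k + 1) a := by rw [← map_mul, one_mul]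
    have hsq : s (k + 1) a * q = s (k + 1) a := by rw [← map_mul, mul_one]
    have hyq : (1 - q) * y * q = 0 := by
      rw [mul_assoc, h.mul_one_succ (h.stageEmbedding_mul_one E k (E k a)), sub_mul, one_mul,
        ← map_mul, one_mul, sub_self]
    have h₁ : star ((1 - q) * y) * s (k + 1) a = 0 := by
      rw [← hqs, star_mul, hq.one_sub.isSelfAdjoint.star_eq, mul_assoc, ← mul_assoc (1 - q),
        hq.one_sub_mul_self, zero_mul, mul_zero]
    have h₂ : (1 - q) * y * star (s (k + 1) a) = 0 := by
      rw [← hsq, star_mul, hq.isSelfAdjoint.star_eq, ← mul_assoc, hyq, zero_mul]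
    rw [stageEmbedding_succ_apply, norm_add_eq_max h₁ h₂]
    exact max_le hy (NonUnitalStarAlgHom.norm_apply_le (s (k + 1)) a)

theorem injective_apply_inclusion (k : ℕ) : Function.Injective fun a : S k ↦
    s (k + 1) (StarSubalgebra.inclusion (hS k.le_succ) a) :=
  (h.injective _).comp (StarSubalgebra.inclusion_injective (hS k.le_succ))

theorem exists_compression (k : ℕ) : ∃ R : F (N k) →ₗ[ℂ] S k, ∀ b : F (N k),
    s (k + 1) (StarSubalgebra.inclusion (hS k.le_succ) (R b)) = s (k + 1) 1 * b * s (k + 1) 1 := by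
  let j : S k →ₗ[ℂ] B := LinearMapClass.linearMap (s (k + 1)) ∘ₗ
    LinearMapClass.linearMap (StarSubalgebra.inclusion (hS k.le_succ))
  obtain ⟨G, hG⟩ := j.exists_leftInverse_of_injective
    (LinearMap.ker_eq_bot.2 (h.injective_apply_inclusion k))
  refine ⟨G ∘ₗ LinearMap.mulLeftRight ℂ (s (k + 1) 1, s (k + 1) 1) ∘ₗ
    LinearMapClass.linearMap (F (N k)).subtype, fun b ↦ ?_⟩
  obtain ⟨z, hz⟩ := h.compress k b b.2
  have hGz : G (s (k + 1) 1 * b * s (k + 1) 1) = z :=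
    (congrArg G hz).trans (LinearMap.congr_fun hG z)
  exact (congrArg j hGz).trans hz.symm

theorem compression_compatible {k : ℕ} {b : B} {a : S k} {a' : S (k + 1)}
    (ha : s (k + 1) (StarSubalgebra.inclusion (hS k.le_succ) a) = s (k + 1) 1 * b * s (k + 1) 1)
    (ha' : s (k + 2) (StarSubalgebra.inclusion (hS (k + 1).le_succ) a') =
      s (k + 2) 1 * b * s (k + 2) 1) : a' = StarSubalgebra.inclusion (hS k.le_succ) a := by
  refine h.injective_apply_inclusion (k + 1) (ha'.trans ?_)
  calc s (k + 2) 1 * b * s (k + 2) 1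
      = s (k + 2) 1 * s (k + 1) 1 * b * (s (k + 1) 1 * s (k + 2) 1) := by
        rw [h.one_mul_one, h.one_mul_one']
    _ = s (k + 2) 1 * (s (k + 1) 1 * b * s (k + 1) 1) * s (k + 2) 1 := by
        simp only [mul_assoc]
    _ = _ := by rw [← ha, h.apply_one_mul, ← map_mul, mul_one]

theorem exists_retraction [∀ k, FiniteDimensional ℂ (S k)] (hF : IsUnitalAFPresentation F) :
    ∃ ψ : B →L[ℂ] A, ∀ k, ∀ b ∈ F (N k), ∀ a : S k,
      s (k + 1) (StarSubalgebra.inclusion (hS k.le_succ) a) = s (k + 1) 1 * b * s (k + 1) 1 →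
      ψ b = a := by
  have hFN : Monotone fun k ↦ F (N k) := hF.monotone.comp h.strictMono.monotone
  choose R hR using h.exists_compression
  have hnorm (k : ℕ) (b : F (N k)) : ‖R k b‖ ≤ ‖b‖ := by
    have hq := (isStarProjection_apply_one s (k + 1)).norm_le
    calc ‖R k b‖ = ‖s (k + 1) (StarSubalgebra.inclusion (hS k.le_succ) (R k b))‖ :=
          (NonUnitalStarAlgHom.norm_map (s (k + 1)) (h.injective (k + 1))
            (StarSubalgebra.inclusion (hS k.le_succ) (R k b))).symm
      _ ≤ ‖s (k + 1) 1‖ * ‖(b : B)‖ * ‖s (k + 1) 1‖ := by rw [hR]; exact norm_mul₃_le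
      _ ≤ 1 * ‖(b : B)‖ * 1 := by gcongr
      _ = ‖b‖ := by rw [one_mul, mul_one]; rfl
  obtain ⟨ψ, hψ⟩ := exists_continuousLinearMap_extending
    (M := fun k ↦ Subalgebra.toSubmodule (F (N k)).toSubalgebra) hFN
    (hF.dense.mono (Set.iUnion_mono fun k ↦ hF.monotone h.strictMono.le_apply))
    (fun k ↦ LinearMapClass.linearMap (S k).subtype ∘ₗ R k)
    (fun k b ↦ congrArg Subtype.val (h.compression_compatible (hR k b) (hR (k + 1) ⟨b, _⟩))) hnorm
  refine ⟨ψ, fun k b hb a ha ↦ (hψ k ⟨b, hb⟩).trans (congrArg Subtype.val ?_)⟩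
  exact h.injective_apply_inclusion k ((hR k ⟨b, hb⟩).trans ha.symm)

theorem exists_hasLeftInverse (hpres : IsUnitalAFPresentation S) (hF : IsUnitalAFPresentation F) :
    ∃ φ : A →L[ℂ] B, φ.HasLeftInverse := by
  have := hpres.finiteDimensional
  choose E hE hEnorm using fun k : ℕ ↦ exists_contractive_left_inverse
    (StarSubalgebra.inclusion_injective (hS k.le_succ))
  obtain ⟨φ, hφ⟩ := exists_continuousLinearMap_extending
    (M := fun k ↦ Subalgebra.toSubmodule (S k).toSubalgebra) hS hpres.dense (stageEmbedding s E)
    (h.stageEmbedding_inclusion hE) (h.norm_stageEmbedding_le hEnorm)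
  obtain ⟨ψ, hψ⟩ := h.exists_retraction hF
  refine ⟨φ, ψ, congrFun (Continuous.ext_on hpres.dense (by fun_prop) continuous_id fun a ha ↦ ?_)⟩
  obtain ⟨k, hk⟩ := Set.mem_iUnion.1 ha
  rw [hφ k ⟨a, hk⟩]
  refine hψ k _ (h.stageEmbedding_mem hF.monotone E k _) ⟨a, hk⟩ ?_
  rw [h.one_succ_mul (one_mul_stageEmbedding E k _), ← map_mul, mul_one]

end IsCompressionTower

theorem exists_hasLeftInverse [IsSimpleRing B] (hS : IsUnitalAFPresentation S)
    (hF : IsUnitalAFPresentation F) (hinf : ¬ FiniteDimensional ℂ B) :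
    ∃ φ : A →L[ℂ] B, φ.HasLeftInverse := by
  obtain ⟨N, s, h⟩ := exists_isCompressionTower hF hinf hS
  exact h.exists_hasLeftInverse hS hF

end Embedding

/-! ### Convergent sequences -/

section ConvergentSequences

open OnePoint

variable {A : Type*} [CStarAlgebra A]

/-- The algebra of sequences in `D` that are constant from the index `n` on, inside the C*-algebra
`C(OnePoint ℕ, A)` of convergent sequences in `A`. -/
def eventuallyConstant (D : StarSubalgebra ℂ A) (n : ℕ) : StarSubalgebra ℂ C(OnePoint ℕ, A) where
  carrier := {f | (∀ x, f x ∈ D) ∧ ∀ i : ℕ, n ≤ i → f i = f ∞}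
  mul_mem' hf hg := ⟨fun x ↦ mul_mem (hf.1 x) (hg.1 x), fun i hi ↦
    congrArg₂ (· * ·) (hf.2 i hi) (hg.2 i hi)⟩
  add_mem' hf hg := ⟨fun x ↦ add_mem (hf.1 x) (hg.1 x), fun i hi ↦
    congrArg₂ (· + ·) (hf.2 i hi) (hg.2 i hi)⟩
  algebraMap_mem' r := ⟨fun _ ↦ D.algebraMap_mem r, fun _ _ ↦ rfl⟩
  star_mem' hf := ⟨fun x ↦ star_mem (hf.1 x), fun i hi ↦ congrArg star (hf.2 i hi)⟩

instance finiteDimensional_eventuallyConstant (D : StarSubalgebra ℂ A) [FiniteDimensional ℂ D]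
    (n : ℕ) : FiniteDimensional ℂ (eventuallyConstant D n) := by
  let L : eventuallyConstant D n →ₗ[ℂ] (Fin n → D) × D :=
    { toFun f := (fun i ↦ ⟨f.1 (i : ℕ), f.2.1 _⟩, ⟨f.1 ∞, f.2.1 _⟩)
      map_add' _ _ := rfl
      map_smul' _ _ := rfl }
  refine FiniteDimensional.of_injective L fun f g hfg ↦ Subtype.ext (ContinuousMap.ext fun x ↦ ?_)
  have hinf : f.1 ∞ = g.1 ∞ := congrArg (fun p ↦ (p.2 : A)) hfg
  induction x using OnePoint.rec with
  | infty => exact hinf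
  | coe i =>
    rcases lt_or_ge i n with hi | hi
    · exact congrArg (fun p ↦ (p.1 ⟨i, hi⟩ : A)) hfg
    · rw [f.2.2 i hi, g.2.2 i hi, hinf]

namespace IsUnitalAFPresentation

variable {S : ℕ → StarSubalgebra ℂ A} (hS : IsUnitalAFPresentation S)
include hS

theorem exists_eventuallyConstant_dist_lt (g : C(OnePoint ℕ, A)) {ε : ℝ} (hε : 0 < ε) :
    ∃ k, ∃ f ∈ eventuallyConstant (S k) k, dist g f < ε := by
  have hg : Tendsto (fun i : ℕ ↦ g i) atTop (𝓝 (g ∞)) := (continuous_iff_from_nat g).1 g.continuous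
  obtain ⟨n, hn⟩ := Metric.tendsto_atTop.1 hg (ε / 2) (half_pos hε)
  obtain ⟨k, hnk, ⟨c, hcS, hc⟩, hk⟩ := ((eventually_ge_atTop n).and
    ((hS.eventually_exists_dist_lt (g ∞) (half_pos hε)).and ((Finset.range n).eventually_all.2
      fun i _ ↦ hS.eventually_exists_dist_lt (g i) hε))).exists
  choose! a haS ha using hk
  let u (i : ℕ) : A := if i < n then a i else c
  have hua (i : ℕ) (hi : i < n) : u i = a i := if_pos hi
  have huc (i : ℕ) (hi : n ≤ i) : u i = c := if_neg hi.not_gt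
  have huS (i : ℕ) : u i ∈ S k := by
    rcases lt_or_ge i n with hi | hi
    · exact hua i hi ▸ haS i (Finset.mem_range.2 hi)
    · exact huc i hi ▸ hcS
  have hdist (i : ℕ) : dist (g i) (u i) < ε := by
    rcases lt_or_ge i n with hi | hi
    · exact hua i hi ▸ ha i (Finset.mem_range.2 hi)
    · rw [huc i hi, ← add_halves ε]
      exact (dist_triangle _ (g ∞) _).trans_lt (add_lt_add (hn i hi) hc)
  refine ⟨k, continuousMapMkNat u c (tendsto_const_nhds.congr' ?_), ⟨fun x ↦ ?_, fun i hi ↦ ?_⟩,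
    (ContinuousMap.dist_lt_iff hε).2 fun x ↦ ?_⟩
  · exact (eventually_ge_atTop n).mono fun i hi ↦ (huc i hi).symm
  · induction x using OnePoint.rec with
    | infty => exact hcS
    | coe i => exact huS i
  · exact huc i (hnk.trans hi)
  · induction x using OnePoint.rec with
    | infty => exact hc.trans (half_lt_self hε)
    | coe i => exact hdist i

theorem eventuallyConstant : IsUnitalAFPresentation fun k ↦ eventuallyConstant (S k) k where
  monotone _ _ hij _ hf := ⟨fun x ↦ hS.monotone hij (hf.1 x), fun k hk ↦ hf.2 k (hij.trans hk)⟩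
  finiteDimensional k := have := hS.finiteDimensional k; inferInstance
  dense g := Metric.mem_closure_iff.2 fun _ hε ↦
    let ⟨k, f, hf, hfg⟩ := hS.exists_eventuallyConstant_dist_lt g hε
    ⟨f, Set.mem_iUnion.2 ⟨k, hf⟩, hfg⟩

end IsUnitalAFPresentation

theorem nonempty_continuousMap_onePoint_nat_equiv_prod (𝕜 V : Type*) [NontriviallyNormedField 𝕜]
    [NormedAddCommGroup V] [NormedSpace 𝕜 V] [CompleteSpace V] :
    Nonempty (C(OnePoint ℕ, V) ≃L[𝕜] V × C(OnePoint ℕ, V)) := by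
  have hshift : Tendsto (fun n : ℕ ↦ ((n + 1 : ℕ) : OnePoint ℕ)) atTop (𝓝 ∞) :=
    ((continuous_iff_from_nat id).1 continuous_id).comp (tendsto_add_atTop_nat 1)
  let shift : C(OnePoint ℕ, OnePoint ℕ) := continuousMapMkNat _ ∞ hshift
  let T : C(OnePoint ℕ, V) →L[𝕜] V × C(OnePoint ℕ, V) :=
    (ContinuousMap.evalCLM 𝕜 ((0 : ℕ) : OnePoint ℕ)).prod (ContinuousMap.compCLM 𝕜 V shift)
  refine ⟨ContinuousLinearEquiv.ofBijective T (LinearMap.ker_eq_bot.2 fun f g hfg ↦ ?_)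
    (LinearMap.range_eq_top.2 fun ⟨v, g⟩ ↦ ?_)⟩
  · have htail (x : OnePoint ℕ) : f (shift x) =
        g (shift x) := DFunLike.congr_fun (congrArg Prod.snd hfg) x
    ext x
    induction x using OnePoint.rec with
    | infty => exact htail ∞
    | coe i =>
      cases i with
      | zero => exact congrArg Prod.fst hfg
      | succ i => exact htail i
  · have hcons : Tendsto (fun n : ℕ ↦ Nat.casesOn n v fun i ↦ g i) atTop (𝓝 (g ∞)) :=
      (tendsto_add_atTop_iff_nat 1).1 ((continuous_iff_from_nat g).1 g.continuous)
    refine ⟨continuousMapMkNat _ _ hcons, Prod.ext rfl (ContinuousMap.ext fun x ↦ ?_)⟩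
    induction x using OnePoint.rec with
    | infty => rfl
    | coe i => rfl

end ConvergentSequences

/-! ### Pełczyński decomposition -/

theorem nonempty_equiv_prod_of_hasLeftInverse {R U V W : Type*} [Ring R] [TopologicalSpace U]
    [AddCommGroup U] [Module R U] [TopologicalSpace V] [AddCommGroup V] [Module R V]
    [TopologicalSpace W] [AddCommGroup W] [Module R W] [IsTopologicalAddGroup W] {φ : V →L[R] W}
    (hφ : φ.HasLeftInverse) (e : V ≃L[R] U × V) : Nonempty (W ≃L[R] U × W) := by
  let f := ContinuousLinearEquiv.equivOfRightInverse hφ.leftInverse φ hφ.leftInverse_leftInverse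
  exact ⟨f.trans <| (e.prodCongr (.refl R _)).trans <|
    (ContinuousLinearEquiv.prodAssoc R U V _).trans <| (ContinuousLinearEquiv.refl R U).prodCongr
      f.symm⟩

section Isomorphism

variable {A B : Type*} [CStarAlgebra A] [CStarAlgebra B] [IsSimpleRing B]
  {S : ℕ → StarSubalgebra ℂ A} {F : ℕ → StarSubalgebra ℂ B}

theorem nonempty_equiv_prod_self (hF : IsUnitalAFPresentation F)
    (hinf : ¬ FiniteDimensional ℂ B) : Nonempty (B ≃L[ℂ] B × B) := by
  obtain ⟨φ, hφ⟩ := exists_hasLeftInverse hF.eventuallyConstant hF hinf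
  obtain ⟨e⟩ := nonempty_continuousMap_onePoint_nat_equiv_prod ℂ B
  exact nonempty_equiv_prod_of_hasLeftInverse hφ e

theorem nonempty_equiv_prod [IsSimpleRing A] (hS : IsUnitalAFPresentation S)
    (hF : IsUnitalAFPresentation F) (hA : ¬ FiniteDimensional ℂ A)
    (hB : ¬ FiniteDimensional ℂ B) : Nonempty (B ≃L[ℂ] A × B) := by
  obtain ⟨φ, hφ⟩ := exists_hasLeftInverse hS hF hB
  obtain ⟨e⟩ := nonempty_equiv_prod_self hS hA
  exact nonempty_equiv_prod_of_hasLeftInverse hφ e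

end Isomorphism

end AFAlgebra

theorem simple_unital_af_linearly_homeomorphic
    (A B : Type*) [CStarAlgebra A] [CStarAlgebra B]
    (hA : ∃ SA : ℕ → NonUnitalStarSubalgebra ℂ A, IsAFPresentation A SA)
    (hB : ∃ SB : ℕ → NonUnitalStarSubalgebra ℂ B, IsAFPresentation B SB)
    (hAsimple : IsSimpleCStarAlgebra A) (hBsimple : IsSimpleCStarAlgebra B)
    (hAinf : ¬ FiniteDimensional ℂ A) (hBinf : ¬ FiniteDimensional ℂ B) :
    Nonempty (A ≃L[ℂ] B) := by
  obtain ⟨S, hS⟩ := AFAlgebra.exists_isUnitalAFPresentation hA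
  obtain ⟨F, hF⟩ := AFAlgebra.exists_isUnitalAFPresentation hB
  have : Nontrivial A := not_subsingleton_iff_nontrivial.1 fun _ ↦ hAinf inferInstance
  have : Nontrivial B := not_subsingleton_iff_nontrivial.1 fun _ ↦ hBinf inferInstance
  have : IsSimpleRing A := AFAlgebra.isSimpleRing_of_isSimpleCStarAlgebra hAsimple
  have : IsSimpleRing B := AFAlgebra.isSimpleRing_of_isSimpleCStarAlgebra hBsimple
  obtain ⟨e⟩ := AFAlgebra.nonempty_equiv_prod hS hF hAinf hBinf
  obtain ⟨f⟩ := AFAlgebra.nonempty_equiv_prod hF hS hBinf hAinf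
  exact ⟨f.trans ((ContinuousLinearEquiv.prodComm ℂ B A).trans e.symm)⟩
end

section
/- Let A be an infinite-dimensional simple AF C*-algebra with AF presentation (A_k). If the presentation (A_k) does not have the Fermion property, then A is *-isomorphic to K, the C*-algebra of compact operators on ℓ²(ℕ, ℂ). -/
/-!
Statement 7 (from the proof of Corollary 1.4/1.5).

An infinite-dimensional simple AF C*-algebra whose AF presentation fails the
Fermion property is *-isomorphic to the compact operators on `ℓ²(ℕ, ℂ)`.
-/

noncomputable section

local notation "H" => lp (fun _ : ℕ => ℂ) 2

/-- The compact operators on `ℓ²(ℕ, ℂ)`, as a subspace of the bounded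
operators with the operator norm. -/
def CompactOperators : Submodule ℂ (H →L[ℂ] H) where
  carrier := {T | IsCompactOperator T}
  add_mem' := fun hS hT => hS.add hT
  zero_mem' := isCompactOperator_zero
  smul_mem' := fun c _T hT => hT.smul c

/-- The presentation `S` has the Fermion property: there are indices
`n 0 < n 1 < ⋯` and nonzero minimal central projections `p k` of `S (n k)` such
that for every minimal projection `e` of the corner `p k • S (n k) • p k`,
the projection `p (k+1) * e` is nonzero and is not a minimal projection of
`S (n (k+1))`. -/
def HasFermionProperty (A : Type*) [NonUnitalCStarAlgebra A]
    (S : ℕ → NonUnitalStarSubalgebra ℂ A) : Prop :=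
  ∃ (n : ℕ → ℕ) (p : ℕ → A),
    StrictMono n ∧
    (∀ k, p k ∈ S (n k)) ∧
    (∀ k, p k * p k = p k ∧ star (p k) = p k) ∧
    (∀ k, p k ≠ 0) ∧
    -- `p k` is central in `S (n k)`
    (∀ k, ∀ a ∈ S (n k), p k * a = a * p k) ∧
    -- `p k` is minimal among the central projections of `S (n k)`
    (∀ k, ∀ q ∈ S (n k), (q * q = q ∧ star q = q) → (∀ a ∈ S (n k), q * a = a * q) →
      q * p k = q → q ≠ 0 → q = p k) ∧
    -- every minimal projection `e` of the corner `p k * S (n k) * p k` meets the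
    -- next summand with multiplicity at least two
    (∀ k, ∀ e ∈ S (n k), (e * e = e ∧ star e = e) → e ≠ 0 → e * p k = e →
      (∀ a ∈ S (n k), ∃ c : ℂ, e * a * e = c • e) →
      (p (k + 1) * e ≠ 0 ∧
        ∃ q ∈ S (n (k + 1)), (q * q = q ∧ star q = q) ∧ q ≠ 0 ∧
          q * (p (k + 1) * e) = q ∧ (p (k + 1) * e) * q = q ∧ q ≠ p (k + 1) * e))

/-!
If the Fermion property fails, some simple summand `p` of some `A_n` is joined by at most one edge
to each summand of every later `A_m`: otherwise multiple edges could be chained indefinitely. A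
minimal projection `e ≤ p` of `A_n` then has rank at most one in every summand of every later `A_m`,
so `e A_m e` is commutative, and hence so is `e A e`. A simple C*-algebra is prime, which rules out
a projection `r < e`: commutativity of the corner gives `r A (e - r) = 0`. Applied inside each
`A_m`, this yields `e A e = ℂ e`.

Thus `A e` is a Hilbert space, with `x⋆ y = ⟪x, y⟫ e`, on which `A` acts by left multiplication, and
`x y⋆` acts as the rank-one operator `z ↦ ⟪y, z⟫ x`. By simplicity the representation is faithful
and its image consists of compact operators; the image is closed and contains the rank-one
operators, so it is the algebra of all compact operators on `A e`. Since `A` is separable and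
infinite-dimensional, `A e` is isometric to `ℓ²(ℕ, ℂ)`.
-/

section Projections

variable {A : Type*} [NonUnitalRing A]

/-- The corner `e A e` is `ℂ e`. For a projection `e` this says that `e` is zero or minimal. -/
def HasScalarCorner [Module ℂ A] (e : A) : Prop := ∀ a, ∃ c : ℂ, e * a * e = c • e

theorem HasScalarCorner.mul_mul [Module ℂ A] [IsScalarTower ℂ A A] [SMulCommClass ℂ A A] {e : A}
    (he : HasScalarCorner e) (v w : A) : HasScalarCorner (v * e * w) := by
  intro a
  obtain ⟨c, hc⟩ := he (w * a * v)
  refine ⟨c, ?_⟩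
  calc v * e * w * a * (v * e * w) = v * (e * (w * a * v) * e) * w := by simp only [mul_assoc]
    _ = c • (v * e * w) := by rw [hc, mul_smul_comm, smul_mul_assoc]

/-- The left ideal `A e` of an idempotent `e`, encoded as the fixed points of right multiplication
by `e`. -/
def leftIdeal [Module ℂ A] [IsScalarTower ℂ A A] (e : A) : Submodule ℂ A :=
  LinearMap.eqLocus (LinearMap.mulRight ℂ e) LinearMap.id

theorem mem_leftIdeal [Module ℂ A] [IsScalarTower ℂ A A] {e x : A} :
    x ∈ leftIdeal e ↔ x * e = x := Iff.rfl

theorem leftIdeal_le_leftIdeal [Module ℂ A] [IsScalarTower ℂ A A] {p q : A} (hqp : q * p = q) :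
    leftIdeal q ≤ leftIdeal p := by
  intro x hx
  rw [mem_leftIdeal] at hx ⊢
  rw [← hx, mul_assoc, hqp]

variable [StarRing A]

/-- A minimal projection, in the sense of a nonzero projection with one-dimensional corner. -/
structure IsMinimalProjection [Module ℂ A] (e : A) : Prop where
  isStarProjection : IsStarProjection e
  ne_zero : e ≠ 0
  hasScalarCorner : HasScalarCorner e

/-- A nonzero central projection which is minimal among these. In a finite-dimensional C*-algebra
these are the units of the simple summands. -/
structure IsMinimalCentralProjection (p : A) : Prop where
  isStarProjection : IsStarProjection p
  ne_zero : p ≠ 0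
  commute : ∀ a, Commute p a
  eq_of_mul_eq : ∀ q, IsStarProjection q → (∀ a, Commute q a) → q * p = q → q ≠ 0 → q = p

theorem IsMinimalCentralProjection.mul_eq_right {p z : A} (hp : IsMinimalCentralProjection p)
    (hz : IsStarProjection z) (hzc : ∀ a, Commute z a) (hzp : z * p ≠ 0) : z * p = p :=
  hp.eq_of_mul_eq (z * p) (hz.mul hp.isStarProjection (hzc p))
    (fun a ↦ (hzc a).mul_left (hp.commute a))
    (by rw [mul_assoc, hp.isStarProjection.isIdempotentElem.eq]) hzp

theorem mul_eq_right_iff_mul_eq_left {p q : A} (hp : IsSelfAdjoint p) (hq : IsSelfAdjoint q) :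
    p * q = q ↔ q * p = q := by
  rw [← star_inj, star_mul, hp.star_eq, hq.star_eq]

theorem exists_minimal_isStarProjection [Module ℂ A] [IsScalarTower ℂ A A] [FiniteDimensional ℂ A]
    {s : Set A} (hs : s.Nonempty) (hproj : ∀ p ∈ s, IsStarProjection p) :
    ∃ p ∈ s, ∀ q ∈ s, q * p = q → q = p := by
  obtain ⟨_, ⟨p, hps, rfl⟩, hmin⟩ := wellFounded_lt.has_min (leftIdeal '' s) (hs.image leftIdeal)
  refine ⟨p, hps, fun q hqs hqp ↦ ?_⟩
  have hle : leftIdeal p ≤ leftIdeal q := by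
    by_contra hlt
    exact hmin _ ⟨q, hqs, rfl⟩ (lt_of_le_not_ge (leftIdeal_le_leftIdeal hqp) hlt)
  have hpq : p * q = q := (mul_eq_right_iff_mul_eq_left (hproj p hps).isSelfAdjoint
    (hproj q hqs).isSelfAdjoint).2 hqp
  exact hpq.symm.trans (hle (hproj p hps).isIdempotentElem)

end Projections

section FiniteDimensional

theorem finite_quasispectrum (𝕜 : Type*) {B : Type*} [Field 𝕜] [NonUnitalRing B] [Module 𝕜 B]
    [IsScalarTower 𝕜 B B] [SMulCommClass 𝕜 B B] [FiniteDimensional 𝕜 B] (b : B) :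
    (quasispectrum 𝕜 b).Finite := by
  rw [Unitization.quasispectrum_eq_spectrum_inr' 𝕜 𝕜 b]
  have : FiniteDimensional 𝕜 (Unitization 𝕜 B) :=
    Module.Finite.equiv (Unitization.linearEquiv 𝕜 𝕜 B).symm
  have hint : IsIntegral 𝕜 (b : Unitization 𝕜 B) := Algebra.IsIntegral.isIntegral _
  refine ((minpoly 𝕜 (b : Unitization 𝕜 B)).rootSet_finite 𝕜).subset fun c hc ↦ ?_
  have hroot := spectrum.subset_polynomial_aeval _ (minpoly 𝕜 (b : Unitization 𝕜 B)) ⟨c, hc, rfl⟩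
  rw [minpoly.aeval, spectrum.zero_eq, Set.mem_singleton_iff] at hroot
  exact (Polynomial.mem_rootSet_of_ne (minpoly.ne_zero hint)).2 (by simpa using hroot)

variable {B : Type*} [NonUnitalCStarAlgebra B] [FiniteDimensional ℂ B]

theorem exists_isStarProjection_mul_eq_smul {x : B} (hx : IsSelfAdjoint x) (hx0 : x ≠ 0) :
    ∃ (r : B) (c : ℝ), IsStarProjection r ∧ r ≠ 0 ∧ c ≠ 0 ∧ x * r = c • r := by
  have hcont (f : ℝ → ℝ) : ContinuousOn f (quasispectrum ℝ x) :=
    (finite_quasispectrum ℝ x).continuousOn f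
  obtain ⟨c, hc, hc0⟩ : ∃ c ∈ quasispectrum ℝ x, c ≠ 0 := by
    by_contra! hzero
    exact hx0 (by rw [← cfcₙ_id' ℝ x, ← cfcₙ_zero ℝ x]; exact cfcₙ_congr hzero)
  let f : ℝ → ℝ := fun t ↦ if t = c then 1 else 0
  have hf0 : f 0 = 0 := by simp [f, hc0.symm]
  refine ⟨cfcₙ f x, c, ⟨?_, cfcₙ_predicate f x⟩, fun h ↦ ?_, hc0, ?_⟩
  · rw [IsIdempotentElem, ← cfcₙ_mul f f x (hcont f) hf0 (hcont f) hf0]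
    congr! 2 with t
    simp [f]
  · rw [← cfcₙ_zero ℝ x, cfcₙ_eq_cfcₙ_iff_eqOn hx (hcont f) hf0 (hcont _) rfl] at h
    simpa [f] using h hc
  · calc x * cfcₙ f x = cfcₙ (fun t ↦ t) x * cfcₙ f x := by rw [cfcₙ_id' ℝ x]
      _ = cfcₙ (fun t ↦ t * f t) x := (cfcₙ_mul _ f x (hcont _) rfl (hcont f) hf0).symm
      _ = cfcₙ (fun t ↦ c • f t) x := by congr! 2 with t; by_cases h : t = c <;> simp [f, h]
      _ = c • cfcₙ f x := cfcₙ_smul c f x (hcont f) hf0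

theorem exists_eq_smul_of_isSelfAdjoint {e x : B} (he : IsStarProjection e)
    (hmin : ∀ q, IsStarProjection q → q * e = q → q ≠ 0 → q = e) (hx : IsSelfAdjoint x)
    (hex : e * x = x) : ∃ c : ℂ, x = c • e := by
  rcases eq_or_ne x 0 with rfl | hx0
  · exact ⟨0, (zero_smul ℂ e).symm⟩
  obtain ⟨r, c, hr, hr0, hc0, hxr⟩ := exists_isStarProjection_mul_eq_smul hx hx0
  have her : e * r = r := by
    apply smul_right_injective B hc0
    calc c • (e * r) = e * x * r := by rw [mul_assoc, hxr, mul_smul_comm]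
      _ = c • r := by rw [hex, hxr]
  have hre : r = e :=
    hmin r hr ((mul_eq_right_iff_mul_eq_left he.isSelfAdjoint hr.isSelfAdjoint).1 her) hr0
  have hxe : x * e = x := (mul_eq_right_iff_mul_eq_left he.isSelfAdjoint hx).1 hex
  exact ⟨c, by rw [Complex.coe_smul, ← hxe, ← hre, hxr]⟩

theorem hasScalarCorner_of_forall_mul_eq {e : B} (he : IsStarProjection e)
    (hmin : ∀ q, IsStarProjection q → q * e = q → q ≠ 0 → q = e) : HasScalarCorner e := by
  have hscalar {h : B} (hh : IsSelfAdjoint h) : ∃ c : ℂ, e * h * e = c • e :=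
    exists_eq_smul_of_isSelfAdjoint he hmin (hh.conjugate_self he.isSelfAdjoint)
      (by simp only [← mul_assoc, he.isIdempotentElem.eq])
  intro a
  obtain ⟨c, hc⟩ := hscalar (realPart a).2
  obtain ⟨d, hd⟩ := hscalar (imaginaryPart a).2
  refine ⟨c + Complex.I * d, ?_⟩
  calc e * a * e = e * (realPart a + Complex.I • imaginaryPart a : B) * e := by
        rw [realPart_add_I_smul_imaginaryPart]
    _ = (c + Complex.I * d) • e := by
        rw [mul_add, add_mul, mul_smul_comm, smul_mul_assoc, hc, hd, smul_smul, add_smul]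

theorem exists_isMinimalProjection_mul_eq {p : B} (hp : IsStarProjection p) (hp0 : p ≠ 0) :
    ∃ e, IsMinimalProjection e ∧ e * p = e := by
  obtain ⟨e, ⟨he, he0, hep⟩, hmin⟩ :=
    exists_minimal_isStarProjection (s := {e : B | IsStarProjection e ∧ e ≠ 0 ∧ e * p = e})
      ⟨p, hp, hp0, hp.isIdempotentElem⟩ fun _ h ↦ h.1
  refine ⟨e, ⟨he, he0, hasScalarCorner_of_forall_mul_eq he fun q hq hqe hq0 ↦ ?_⟩, hep⟩
  exact hmin q ⟨hq, hq0, by rw [← hqe, mul_assoc, hep]⟩ hqe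

variable (B) in
theorem exists_isStarProjection_forall_mul_eq :
    ∃ u : B, IsStarProjection u ∧ ∀ b, u * b = b ∧ b * u = b := by
  let := CStarAlgebra.spectralOrder B
  have := CStarAlgebra.spectralOrderedRing B
  have := FiniteDimensional.proper ℂ B
  have hl := CStarAlgebra.increasingApproximateUnit B
  -- In finite dimension a bounded approximate unit clusters at a unit.
  obtain ⟨u, -, hu⟩ := (isCompact_closedBall (0 : B) 1).exists_clusterPt
    (Filter.le_principal_iff.2 hl.closedBall_mem)
  have : (nhds u ⊓ CStarAlgebra.approximateUnit B).NeBot := hu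
  have hright (b : B) : b * u = b := tendsto_nhds_unique
    ((continuous_const_mul b).continuousAt.tendsto.mono_left inf_le_left)
    ((hl.tendsto_mul_left b).mono_left inf_le_right)
  have hleft (b : B) : star u * b = b := by simpa using congrArg star (hright (star b))
  have hstar : star u = u := (hright (star u)).symm.trans (hleft u)
  exact ⟨u, ⟨hright u, hstar⟩, fun b ↦ ⟨by simpa only [hstar] using hleft b, hright b⟩⟩

theorem exists_isMinimalCentralProjection_mul_ne_zero {w : B} (hw : w ≠ 0) :
    ∃ p, IsMinimalCentralProjection p ∧ p * w ≠ 0 := by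
  obtain ⟨u, hu, hunit⟩ := exists_isStarProjection_forall_mul_eq B
  obtain ⟨p, ⟨hp, hpc, hpw⟩, hmin⟩ := exists_minimal_isStarProjection
    (s := {p : B | IsStarProjection p ∧ (∀ a, Commute p a) ∧ p * w ≠ 0})
    ⟨u, hu, fun a ↦ (hunit a).1.trans (hunit a).2.symm, by rwa [(hunit w).1]⟩ fun _ h ↦ h.1
  refine ⟨p, ⟨hp, fun h ↦ hpw (by rw [h, zero_mul]), hpc, fun q hq hqc hqp hq0 ↦ ?_⟩, hpw⟩
  by_cases hqw : q * w = 0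
  · have hsub : p - q = p := hmin (p - q)
      ⟨hq.sub_of_mul_eq_left hp hqp, fun a ↦ (hpc a).sub_left (hqc a),
        by rwa [sub_mul, hqw, sub_zero]⟩
      (by rw [sub_mul, hp.isIdempotentElem.eq, hqp])
    exact absurd (sub_eq_self.1 hsub) hq0
  · exact hmin q ⟨hq, hqc, hqw⟩ hqp

theorem isClosed_of_finiteDimensional {A : Type*} [NonUnitalCStarAlgebra A]
    (S : NonUnitalStarSubalgebra ℂ A) [FiniteDimensional ℂ S] : IsClosed (S : Set A) :=
  have : FiniteDimensional ℂ S.toNonUnitalSubalgebra.toSubmodule := ‹FiniteDimensional ℂ S›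
  S.toNonUnitalSubalgebra.toSubmodule.closed_of_finiteDimensional

theorem exists_central_isStarProjection_of_ideal (J : NonUnitalStarSubalgebra ℂ B)
    (hJ : ∀ b, ∀ x ∈ J, b * x ∈ J) :
    ∃ z ∈ J, IsStarProjection z ∧ (∀ b, Commute z b) ∧ ∀ x ∈ J, z * x = x := by
  have : FiniteDimensional ℂ J :=
    FiniteDimensional.finiteDimensional_submodule J.toNonUnitalSubalgebra.toSubmodule
  have : IsClosed (J : Set B) := isClosed_of_finiteDimensional J
  obtain ⟨z, hz, hunit⟩ := exists_isStarProjection_forall_mul_eq J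
  have hzB : IsStarProjection (z : B) := hz.map (NonUnitalStarSubalgebraClass.subtype J)
  have hleft : ∀ x ∈ J, z * x = x := fun x hx ↦ congrArg Subtype.val (hunit ⟨x, hx⟩).1
  have hzbz (b : B) : z * (b * z) = b * z := hleft _ (hJ b z z.2)
  refine ⟨z, z.2, hzB, fun b ↦ ?_, hleft⟩
  calc z * b = star (z * (star b * z)) := by
        rw [hzbz, star_mul, star_star, hzB.isSelfAdjoint.star_eq]
    _ = b * z := by rw [star_mul, star_mul, star_star, hzB.isSelfAdjoint.star_eq, mul_assoc, hzbz]

end FiniteDimensional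

section Annihilator

variable {A : Type*} [NonUnitalCStarAlgebra A]

/-- The left annihilator `{x | x A g = 0}` of the left ideal `A g`; it is a closed two-sided
ideal. -/
def annihilator (g : A) : NonUnitalStarSubalgebra ℂ A where
  carrier := {x | ∀ a, x * a * g = 0}
  zero_mem' := by simp
  add_mem' hx hy a := by rw [add_mul, add_mul, hx a, hy a, add_zero]
  mul_mem' {x y} hx _ a := by rw [mul_assoc x y a]; exact hx (y * a)
  smul_mem' c x hx a := by rw [smul_mul_assoc, smul_mul_assoc, hx a, smul_zero]
  star_mem' {x} hx a := by
    rw [← CStarRing.star_mul_self_eq_zero_iff]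
    calc star (star x * a * g) * (star x * a * g)
        = star g * star a * (x * (star x * a) * g) := by simp [mul_assoc]
      _ = 0 := by rw [hx, mul_zero]

theorem mem_annihilator {g x : A} : x ∈ annihilator g ↔ ∀ a, x * a * g = 0 := Iff.rfl

theorem mul_mem_annihilator {g x : A} (a : A) (hx : x ∈ annihilator g) :
    a * x ∈ annihilator g := fun b ↦ by
  rw [mul_assoc a x b, mul_assoc, hx b, mul_zero]

theorem isClosed_annihilator (g : A) : IsClosed (annihilator g : Set A) := by
  have : (annihilator g : Set A) = ⋂ a, {x | x * a * g = 0} := by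
    ext x
    simp only [SetLike.mem_coe, mem_annihilator, Set.mem_iInter, Set.mem_ofPred_eq]
  rw [this]
  exact isClosed_iInter fun a ↦ isClosed_eq (by fun_prop) continuous_const

end Annihilator

section Summands

variable {B : Type*} [NonUnitalCStarAlgebra B] [FiniteDimensional ℂ B] {p e y : B}

theorem IsMinimalCentralProjection.exists_mul_mul_ne_zero (hp : IsMinimalCentralProjection p)
    (he0 : e ≠ 0) (hep : e * p = e) (hy0 : y ≠ 0) (hyp : y * p = y) : ∃ a, e * a * y ≠ 0 := by
  by_contra! he
  obtain ⟨z, hzy, hz, hzc, hunit⟩ :=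
    exists_central_isStarProjection_of_ideal (annihilator y) fun b _ ↦ mul_mem_annihilator b
  have hzp0 : z * p ≠ 0 := fun hzp ↦ he0 <| by
    rw [← hunit e he, ← hep, ← (hp.commute e).eq, ← mul_assoc, hzp, zero_mul]
  have hzp : z * p = p := hp.mul_eq_right hz hzc hzp0
  exact hy0 (by rw [← hyp, ← (hp.commute y).eq, ← hzp, hzy])

theorem IsMinimalCentralProjection.exists_mul_mul_eq (hp : IsMinimalCentralProjection p)
    (he : IsMinimalProjection e) (hep : e * p = e) (hy0 : y ≠ 0) (hyp : y * p = y) :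
    ∃ v w, v * y * w = e := by
  obtain ⟨a, ha⟩ := hp.exists_mul_mul_ne_zero he.ne_zero hep hy0 hyp
  obtain ⟨c, hc⟩ := he.hasScalarCorner (a * y * star y * star a)
  have hx : e * a * y * (star y * star a * e) = c • e := by simpa only [mul_assoc] using hc
  have hc0 : c ≠ 0 := by
    rintro rfl
    rw [zero_smul] at hx
    apply ha
    rw [← CStarRing.mul_star_self_eq_zero_iff]
    simpa [he.isStarProjection.isSelfAdjoint.star_eq, mul_assoc] using hx
  refine ⟨e * a, c⁻¹ • (star y * star a * e), ?_⟩
  rw [mul_smul_comm, hx, inv_smul_smul₀ hc0]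

theorem commute_corner_of_hasScalarCorner (he : IsIdempotentElem e)
    (hcorner : ∀ q, IsMinimalCentralProjection q → HasScalarCorner (q * e)) (x y : B) :
    Commute (e * x * e) (e * y * e) := by
  by_contra hne
  obtain ⟨q, hq, hqne⟩ := exists_isMinimalCentralProjection_mul_ne_zero (sub_ne_zero.2 hne)
  have hscalar (x : B) : ∃ c : ℂ, q * (e * x * e) = c • (q * e) := by
    obtain ⟨c, hc⟩ := hcorner q hq x
    refine ⟨c, ?_⟩
    calc q * (e * x * e) = q * q * (e * x * e) := by rw [hq.isStarProjection.isIdempotentElem.eq]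
      _ = q * (q * (e * x)) * e := by simp only [mul_assoc]
      _ = q * e * x * (q * e) := by rw [(hq.commute (e * x)).eq]; simp only [mul_assoc]
      _ = c • (q * e) := hc
  obtain ⟨c, hc⟩ := hscalar x
  obtain ⟨d, hd⟩ := hscalar y
  have he_corner (x : B) : e * (e * x * e) = e * x * e := by simp only [← mul_assoc, he.eq]
  refine hqne ?_
  rw [mul_sub, ← mul_assoc q (e * x * e), ← mul_assoc q (e * y * e), hc, hd, smul_mul_assoc,
    smul_mul_assoc, mul_assoc q, mul_assoc q, he_corner, he_corner, hc, hd, smul_comm c d, sub_self]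

end Summands

section BratteliDiagram

/-- In the Bratteli diagram of `φ`, the summands with units `p` and `q` are joined by at least two
edges. The multiplicity is the rank of `q (φ e)` for a minimal projection `e ≤ p`. -/
def HasMultipleEdge {B C : Type*} [NonUnitalRing B] [StarRing B] [Module ℂ B] [NonUnitalRing C]
    [StarRing C] [Module ℂ C] (φ : B →⋆ₙₐ[ℂ] C) (p : B) (q : C) : Prop :=
  ∀ e, IsMinimalProjection e → e * p = e → ¬ HasScalarCorner (q * φ e)

theorem hasScalarCorner_mul_map_of_not_hasMultipleEdge {B C : Type*} [NonUnitalCStarAlgebra B]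
    [FiniteDimensional ℂ B] [NonUnitalCStarAlgebra C] {φ : B →⋆ₙₐ[ℂ] C} {p e : B} {q : C}
    (hp : IsMinimalCentralProjection p) (hq : ∀ c, Commute q c) (hedge : ¬ HasMultipleEdge φ p q)
    (he : IsMinimalProjection e) (hep : e * p = e) : HasScalarCorner (q * φ e) := by
  simp only [HasMultipleEdge, not_forall, not_not] at hedge
  obtain ⟨f, hf, hfp, hscalar⟩ := hedge
  obtain ⟨v, w, rfl⟩ := hp.exists_mul_mul_eq he hep hf.ne_zero hfp
  have hqe : q * φ (v * f * w) = φ v * (q * φ f) * φ w := by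
    rw [map_mul, map_mul, ← mul_assoc, ← mul_assoc, (hq (φ v)).eq, mul_assoc (φ v)]
  rw [hqe]
  exact hscalar.mul_mul _ _

variable {A : Type*} [NonUnitalCStarAlgebra A] {S : ℕ → NonUnitalStarSubalgebra ℂ A}

theorem HasMultipleEdge.exists_subprojection_ne {S T : NonUnitalStarSubalgebra ℂ A}
    [FiniteDimensional ℂ T] {hST : S ≤ T} {p e : S} {q : T}
    (hedge : HasMultipleEdge (NonUnitalStarSubalgebra.inclusion hST) p q)
    (hq : IsMinimalCentralProjection q) (he : IsMinimalProjection e) (hep : e * p = e) :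
    (q * (e : A) : A) ≠ 0 ∧ ∃ r : T, IsStarProjection r ∧ r ≠ 0 ∧
      (r * (q * e) : A) = r ∧ (q * e * r : A) = r ∧ (r : A) ≠ q * e := by
  have : IsClosed (T : Set A) := isClosed_of_finiteDimensional T
  let f : T := q * NonUnitalStarSubalgebra.inclusion hST e
  have hf : IsStarProjection f :=
    hq.isStarProjection.mul (he.isStarProjection.map _) (hq.commute _)
  have hscalar : ¬ HasScalarCorner f := hedge e he hep
  refine ⟨fun h ↦ hscalar fun a ↦ ⟨0, ?_⟩, ?_⟩
  · have hf0 : f = 0 := Subtype.ext h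
    rw [hf0, mul_zero, smul_zero]
  · by_contra! hmin
    refine hscalar (hasScalarCorner_of_forall_mul_eq hf fun r hr hrf hr0 ↦ Subtype.ext ?_)
    have hfr : f * r = r :=
      (mul_eq_right_iff_mul_eq_left hf.isSelfAdjoint hr.isSelfAdjoint).2 hrf
    exact hmin r hr hr0 (congrArg Subtype.val hrf) (congrArg Subtype.val hfr)

theorem IsAFPresentation.exists_isMinimalCentralProjection [Nontrivial A]
    (hS : IsAFPresentation A S) : ∃ n, ∃ p : S n, IsMinimalCentralProjection p := by
  obtain ⟨a, ha⟩ := exists_ne (0 : A)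
  obtain ⟨b, hb, hb0⟩ := hS.2.2.exists_mem_open isOpen_compl_singleton ⟨a, ha⟩
  obtain ⟨n, hn⟩ := Set.mem_iUnion.1 hb
  have := hS.2.1 n
  have : IsClosed (S n : Set A) := isClosed_of_finiteDimensional (S n)
  obtain ⟨p, hp, -⟩ := exists_isMinimalCentralProjection_mul_ne_zero
    (w := (⟨b, hn⟩ : S n)) fun h ↦ hb0 (congrArg Subtype.val h)
  exact ⟨n, p, hp⟩

theorem IsAFPresentation.hasFermionProperty_of_strictMono (hS : IsAFPresentation A S) {n : ℕ → ℕ}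
    (hn : StrictMono n) (p : ∀ k, S (n k)) (hp : ∀ k, IsMinimalCentralProjection (p k))
    (hedge : ∀ k, HasMultipleEdge
      (NonUnitalStarSubalgebra.inclusion (hS.1 (hn.monotone k.le_succ))) (p k) (p (k + 1))) :
    HasFermionProperty A S := by
  refine ⟨n, fun k ↦ p k, hn, fun k ↦ (p k).2, fun k ↦ ?_, fun k h ↦ (hp k).ne_zero (Subtype.ext h),
    fun k a ha ↦ congrArg Subtype.val ((hp k).commute ⟨a, ha⟩).eq,
    fun k q hq hproj hcomm hqp hq0 ↦ ?_, fun k e he hproj he0 hep hscalar ↦ ?_⟩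
  · have hproj := (hp k).isStarProjection
    exact ⟨congrArg Subtype.val hproj.isIdempotentElem, congrArg Subtype.val hproj.isSelfAdjoint⟩
  · exact congrArg Subtype.val ((hp k).eq_of_mul_eq ⟨q, hq⟩
      ⟨Subtype.ext hproj.1, Subtype.ext hproj.2⟩ (fun a ↦ Subtype.ext (hcomm a a.2))
      (Subtype.ext hqp) fun h ↦ hq0 (congrArg Subtype.val h))
  · have := hS.2.1 (n (k + 1))
    have hmin : IsMinimalProjection (⟨e, he⟩ : S (n k)) :=
      ⟨⟨Subtype.ext hproj.1, Subtype.ext hproj.2⟩, fun h ↦ he0 (congrArg Subtype.val h),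
        fun a ↦ (hscalar a a.2).imp fun _ hc ↦ Subtype.ext hc⟩
    obtain ⟨hne, r, hr, hr0, hrf, hfr, hrne⟩ :=
      (hedge k).exists_subprojection_ne (hp (k + 1)) hmin (Subtype.ext hep)
    exact ⟨hne, r, r.2, ⟨congrArg Subtype.val hr.isIdempotentElem,
      congrArg Subtype.val hr.isSelfAdjoint⟩, fun h ↦ hr0 (Subtype.ext h), hrf, hfr, hrne⟩

theorem IsAFPresentation.hasFermionProperty [Nontrivial A] (hS : IsAFPresentation A S)
    (hedge : ∀ n (p : S n), IsMinimalCentralProjection p → ∃ m, ∃ hnm : n < m, ∃ q : S m,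
      IsMinimalCentralProjection q ∧
        HasMultipleEdge (NonUnitalStarSubalgebra.inclusion (hS.1 hnm.le)) p q) :
    HasFermionProperty A S := by
  let X := Σ n, {p : S n // IsMinimalCentralProjection p}
  have hnext (x : X) : ∃ y : X, ∃ hlt : x.1 < y.1,
      HasMultipleEdge (NonUnitalStarSubalgebra.inclusion (hS.1 hlt.le)) x.2.1 y.2.1 := by
    obtain ⟨m, hm, q, hq, hpq⟩ := hedge x.1 x.2.1 x.2.2
    exact ⟨⟨m, q, hq⟩, hm, hpq⟩
  choose next hnext using hnext
  obtain ⟨n, p, hp⟩ := hS.exists_isMinimalCentralProjection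
  let s (k : ℕ) : X := next^[k] ⟨n, p, hp⟩
  have hs (k : ℕ) : ∃ hlt : (s k).1 < (s (k + 1)).1, HasMultipleEdge
      (NonUnitalStarSubalgebra.inclusion (hS.1 hlt.le)) (s k).2.1 (s (k + 1)).2.1 := by
    rw [show s (k + 1) = next (s k) from Function.iterate_succ_apply' next k _]
    exact hnext (s k)
  exact hS.hasFermionProperty_of_strictMono (strictMono_nat_of_lt_succ fun k ↦ (hs k).fst)
    (fun k ↦ (s k).2.1) (fun k ↦ (s k).2.2) fun k ↦ (hs k).snd

end BratteliDiagram

section Simple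

variable {A : Type*} [NonUnitalCStarAlgebra A]

theorem IsSimpleCStarAlgebra.eq_bot_or_eq_top (hA : IsSimpleCStarAlgebra A) {I : AddSubgroup A}
    (hI : IsClosed (I : Set A)) (hleft : ∀ a, ∀ x ∈ I, a * x ∈ I)
    (hright : ∀ a, ∀ x ∈ I, x * a ∈ I) : I = ⊥ ∨ I = ⊤ := by
  let J : TwoSidedIdeal A := .mk' I I.zero_mem I.add_mem I.neg_mem (hleft _ _) (hright _ _)
  have hJ (x : A) : x ∈ J ↔ x ∈ I := TwoSidedIdeal.mem_mk' ..
  have hclosed : IsClosed (J : Set A) := by rwa [show (J : Set A) = I from Set.ext hJ]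
  refine (hA J hclosed).imp (fun h ↦ ?_) fun h ↦ ?_
  · ext x
    rw [← hJ, h, TwoSidedIdeal.mem_bot, AddSubgroup.mem_bot]
  · ext x
    rw [← hJ, h]
    exact iff_of_true trivial trivial

theorem IsSimpleCStarAlgebra.eq_zero_or_eq_zero_of_forall_mul_mul_eq_zero
    (hA : IsSimpleCStarAlgebra A) {x y : A} (hxy : ∀ a, x * a * y = 0) : x = 0 ∨ y = 0 := by
  refine (hA.eq_bot_or_eq_top (I := (annihilator y).toAddSubgroup) (isClosed_annihilator y)
    (fun a _ ↦ mul_mem_annihilator a) fun a z hz b ↦ ?_).imp (fun h ↦ ?_) fun h ↦ ?_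
  · rw [mul_assoc z a b]
    exact hz (a * b)
  · have hx : x ∈ (annihilator y).toAddSubgroup := hxy
    rwa [h] at hx
  · have hy : star y ∈ annihilator y := by
      change star y ∈ (annihilator y).toAddSubgroup
      rw [h]
      trivial
    rw [← CStarRing.star_mul_self_eq_zero_iff, ← CStarRing.star_mul_self_eq_zero_iff]
    calc star (star y * y) * (star y * y) = star y * (y * star y) * y := by simp [mul_assoc]
      _ = 0 := hy _

theorem IsSimpleCStarAlgebra.eq_zero_or_eq_of_commute_corner (hA : IsSimpleCStarAlgebra A)
    {e r : A} (he : IsStarProjection e) (hcomm : ∀ x y, Commute (e * x * e) (e * y * e))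
    (hr : IsStarProjection r) (hre : r * e = r) : r = 0 ∨ r = e := by
  have her : e * r = r := (mul_eq_right_iff_mul_eq_left he.isSelfAdjoint hr.isSelfAdjoint).2 hre
  have hcompl : e * (e - r) = e - r := by rw [mul_sub, he.isIdempotentElem.eq, her]
  have hrcompl : r * (e - r) = 0 := by rw [mul_sub, hre, hr.isIdempotentElem.eq, sub_self]
  have hprod (a : A) : r * a * (e - r) = 0 := by
    calc r * a * (e - r) = r * e * a * (e * (e - r)) := by rw [hre, hcompl]
      _ = e * r * e * (e * a * e) * (e - r) := by rw [her, hre]; simp only [← mul_assoc, hre]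
      _ = e * a * e * (r * (e - r)) := by rw [(hcomm r a).eq, her, hre, mul_assoc]
      _ = 0 := by rw [hrcompl, mul_zero]
  exact (hA.eq_zero_or_eq_zero_of_forall_mul_mul_eq_zero hprod).imp_right
    fun h ↦ (sub_eq_zero.1 h).symm

end Simple

section MinimalProjection

variable {A : Type*} [NonUnitalCStarAlgebra A] {S : ℕ → NonUnitalStarSubalgebra ℂ A}

theorem IsAFPresentation.forall_of_isClosed (hS : IsAFPresentation A S) (n : ℕ) {P : A → Prop}
    (hclosed : IsClosed {a | P a}) (hP : ∀ m, n < m → ∀ a ∈ S m, P a) (a : A) : P a := by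
  refine closure_minimal (s := ⋃ k, (S k : Set A)) (fun x hx ↦ ?_) hclosed (hS.2.2 a)
  obtain ⟨k, hk⟩ := Set.mem_iUnion.1 hx
  exact hP (max k (n + 1)) (by omega) x (hS.1 (le_max_left _ _) hk)

theorem IsAFPresentation.commute_corner (hS : IsAFPresentation A S) {n : ℕ} {e : S n}
    (he : IsIdempotentElem e)
    (hcorner : ∀ m, ∀ hnm : n < m, ∀ q : S m, IsMinimalCentralProjection q →
      HasScalarCorner (q * NonUnitalStarSubalgebra.inclusion (hS.1 hnm.le) e)) (x y : A) :
    Commute (e * x * e : A) (e * y * e) := by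
  refine hS.forall_of_isClosed n (P := fun x ↦ Commute (e * x * e : A) (e * y * e))
    (isClosed_eq (by fun_prop) (by fun_prop)) (fun l _ x hx ↦ ?_) x
  refine hS.forall_of_isClosed l (P := fun y ↦ Commute (e * x * e : A) (e * y * e))
    (isClosed_eq (by fun_prop) (by fun_prop)) (fun m hlm y hy ↦ ?_) y
  have hnm : n < m := by omega
  have := hS.2.1 m
  have : IsClosed (S m : Set A) := isClosed_of_finiteDimensional (S m)
  exact congrArg Subtype.val <| commute_corner_of_hasScalarCorner (he.map _) (hcorner m hnm)
    ⟨x, hS.1 hlm.le hx⟩ ⟨y, hy⟩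

protected theorem IsAFPresentation.hasScalarCorner_of_forall_mul_eq (hS : IsAFPresentation A S)
    {n : ℕ} {e : A} (hen : e ∈ S n) (he : IsStarProjection e)
    (hmin : ∀ r, IsStarProjection r → r * e = r → r ≠ 0 → r = e) : HasScalarCorner e := by
  have hspan (a : A) : e * a * e ∈ Submodule.span ℂ {e} := by
    refine hS.forall_of_isClosed n (P := fun a ↦ e * a * e ∈ Submodule.span ℂ {e})
      ((Submodule.closed_of_finiteDimensional (Submodule.span ℂ {e})).preimage
        (f := fun a ↦ e * a * e) (by fun_prop)) (fun m hnm a ha ↦ ?_) a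
    have := hS.2.1 m
    have : IsClosed (S m : Set A) := isClosed_of_finiteDimensional (S m)
    have hscalar : HasScalarCorner (⟨e, hS.1 hnm.le hen⟩ : S m) :=
      hasScalarCorner_of_forall_mul_eq ⟨Subtype.ext he.1, Subtype.ext he.2⟩
        fun r hr hre hr0 ↦ Subtype.ext <| hmin r (hr.map (NonUnitalStarSubalgebraClass.subtype _))
          (congrArg Subtype.val hre) fun h ↦ hr0 (Subtype.ext h)
    obtain ⟨c, hc⟩ := hscalar ⟨a, ha⟩
    exact Submodule.mem_span_singleton.2 ⟨c, (congrArg Subtype.val hc).symm⟩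
  exact fun a ↦ (Submodule.mem_span_singleton.1 (hspan a)).imp fun _ ↦ Eq.symm

theorem IsAFPresentation.exists_isMinimalProjection [Nontrivial A] (hS : IsAFPresentation A S)
    (hA : IsSimpleCStarAlgebra A) (hF : ¬ HasFermionProperty A S) :
    ∃ e : A, IsMinimalProjection e := by
  obtain ⟨n, p, hp, hedge⟩ : ∃ n, ∃ p : S n, IsMinimalCentralProjection p ∧
      ∀ m, ∀ hnm : n < m, ∀ q : S m, IsMinimalCentralProjection q →
        ¬ HasMultipleEdge (NonUnitalStarSubalgebra.inclusion (hS.1 hnm.le)) p q := by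
    by_contra! hedge
    exact hF (hS.hasFermionProperty hedge)
  have := hS.2.1 n
  have : IsClosed (S n : Set A) := isClosed_of_finiteDimensional (S n)
  obtain ⟨e, he, hep⟩ := exists_isMinimalProjection_mul_eq hp.isStarProjection hp.ne_zero
  have heA : IsStarProjection (e : A) :=
    he.isStarProjection.map (NonUnitalStarSubalgebraClass.subtype (S n))
  have hcorner (m : ℕ) (hnm : n < m) (q : S m) (hq : IsMinimalCentralProjection q) :
      HasScalarCorner (q * NonUnitalStarSubalgebra.inclusion (hS.1 hnm.le) e) := by
    have : IsClosed (S m : Set A) := by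
      have := hS.2.1 m
      exact isClosed_of_finiteDimensional (S m)
    exact hasScalarCorner_mul_map_of_not_hasMultipleEdge hp hq.commute (hedge m hnm q hq) he hep
  have hcomm := hS.commute_corner he.isStarProjection.isIdempotentElem hcorner
  exact ⟨e, heA, fun h ↦ he.ne_zero (Subtype.ext h), hS.hasScalarCorner_of_forall_mul_eq e.2 heA
    fun r hr hre hr0 ↦ (hA.eq_zero_or_eq_of_commute_corner heA hcomm hr hre).resolve_left hr0⟩

end MinimalProjection

section HilbertSpace

open InnerProductSpace

variable {𝕜 E F : Type*} [RCLike 𝕜] [NormedAddCommGroup E] [InnerProductSpace 𝕜 E]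
  [NormedAddCommGroup F] [InnerProductSpace 𝕜 F]

theorem isCompactOperator_rankOne (x : E) (y : F) : IsCompactOperator (rankOne 𝕜 x y) := by
  rw [rankOne_def']
  exact (isCompactOperator_of_locallyCompactSpace_dom (innerSL 𝕜 y : F →L[𝕜] 𝕜)).clm_comp
    (ContinuousLinearMap.toSpanSingleton 𝕜 x)

theorem norm_sub_starProjection_apply_le (V : Submodule 𝕜 E) [V.HasOrthogonalProjection] (x : E)
    {y : E} (hy : y ∈ V) : ‖x - V.starProjection x‖ ≤ ‖x - y‖ := by
  rw [Submodule.starProjection_minimal]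
  exact ciInf_le ⟨0, by rintro _ ⟨v, rfl⟩; positivity⟩ (⟨y, hy⟩ : V)

theorem mem_closure_of_isCompactOperator [CompleteSpace E] [CompleteSpace F]
    (R : Submodule 𝕜 (F →L[𝕜] E)) (hR : ∀ x y, rankOne 𝕜 x y ∈ R) {T : F →L[𝕜] E}
    (hT : IsCompactOperator T) : T ∈ closure (R : Set (F →L[𝕜] E)) := by
  rw [Metric.mem_closure_iff]
  intro ε hε
  have hcompact : IsCompact (closure (T '' Metric.closedBall 0 1)) :=
    IsCompactOperator.isCompact_closure_image_closedBall (f := (T : F →ₗ[𝕜] E)) hT 1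
  obtain ⟨t, ht, hcover⟩ :=
    Metric.totallyBounded_iff.1 hcompact.totallyBounded (ε / 2) (half_pos hε)
  let V := Submodule.span 𝕜 t
  have : FiniteDimensional 𝕜 V := FiniteDimensional.span_of_finite 𝕜 ht
  refine ⟨V.starProjection ∘L T, ?_, ?_⟩
  · rw [(stdOrthonormalBasis 𝕜 V).starProjection_eq_sum_rankOne,
      ContinuousLinearMap.finsetSum_comp]
    refine R.sum_mem fun i _ ↦ ?_
    rw [rankOne_comp]
    exact hR _ _
  · rw [dist_eq_norm]
    refine (ContinuousLinearMap.opNorm_le_of_unit_norm (half_pos hε).le fun z hz ↦ ?_).trans_lt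
      (half_lt_self hε)
    obtain ⟨y, hy, hyz⟩ := Set.mem_iUnion₂.1 <| hcover <| subset_closure
      (Set.mem_image_of_mem T (mem_closedBall_zero_iff.2 hz.le))
    rw [Metric.mem_ball, dist_eq_norm] at hyz
    exact (norm_sub_starProjection_apply_le V (T z) (Submodule.subset_span hy)).trans hyz.le

theorem countable_of_orthonormal [TopologicalSpace.SeparableSpace E] {ι : Type*} {v : ι → E}
    (hv : Orthonormal 𝕜 v) : Countable ι := by
  refine Pairwise.countable_of_isOpen_disjoint (s := fun i ↦ Metric.ball (v i) (1 / 2))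
    (fun i j hij ↦ Metric.ball_disjoint_ball ?_) (fun i ↦ Metric.isOpen_ball)
    fun i ↦ ⟨v i, Metric.mem_ball_self one_half_pos⟩
  have hsq : ‖v i - v j‖ ^ 2 = 2 := by
    rw [@norm_sub_sq 𝕜, hv.1 i, hv.1 j, hv.2 hij]
    norm_num
  rw [dist_eq_norm]
  nlinarith [norm_nonneg (v i - v j)]

theorem nonempty_linearIsometryEquiv_l2 [CompleteSpace E] [TopologicalSpace.SeparableSpace E]
    (hE : ¬ FiniteDimensional 𝕜 E) : Nonempty (E ≃ₗᵢ[𝕜] lp (fun _ : ℕ ↦ 𝕜) 2) := by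
  obtain ⟨w, b, -⟩ := exists_hilbertBasis 𝕜 E
  have : Countable w := countable_of_orthonormal b.orthonormal
  have : Infinite w := by
    by_contra hw
    rw [not_infinite_iff_finite] at hw
    have := Fintype.ofFinite w
    exact hE b.toOrthonormalBasis.toBasis.finiteDimensional_of_finite
  obtain ⟨φ⟩ : Nonempty (ℕ ≃ w) := inferInstance
  refine ⟨(HilbertBasis.mk (b.orthonormal.comp φ φ.injective) ?_).repr⟩
  rw [φ.surjective.range_comp b, b.dense_span]

end HilbertSpace

section Representation

open InnerProductSpace
open scoped CStarAlgebra

variable {A : Type*} [NonUnitalCStarAlgebra A]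

theorem IsSimpleCStarAlgebra.injective_of_ne_zero {B : Type*} [NonUnitalCStarAlgebra B]
    (hA : IsSimpleCStarAlgebra A) {π : A →⋆ₙₐ[ℂ] B} (hπ : π ≠ 0) : Function.Injective π := by
  obtain ⟨a, ha⟩ := DFunLike.ne_iff.1 hπ
  rw [injective_iff_map_eq_zero]
  let K : AddSubgroup A := (π : A →+ B).ker
  have hK (x : A) : x ∈ K ↔ π x = 0 := Iff.rfl
  rcases hA.eq_bot_or_eq_top (I := K) (isClosed_singleton.preimage (map_continuous π))
    (fun a x hx ↦ by rw [hK] at hx ⊢; rw [map_mul, hx, mul_zero])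
    (fun a x hx ↦ by rw [hK] at hx ⊢; rw [map_mul, hx, zero_mul]) with h | h
  · intro x hx
    rwa [← hK, h, AddSubgroup.mem_bot] at hx
  · exact absurd ((hK a).1 (h ▸ AddSubgroup.mem_top a)) ha

variable {E : Type*} [NormedAddCommGroup E] [InnerProductSpace ℂ E] [CompleteSpace E]
  {π : A →⋆ₙₐ[ℂ] (E →L[ℂ] E)}

theorem IsSimpleCStarAlgebra.isCompactOperator_map (hA : IsSimpleCStarAlgebra A) {a : A}
    (ha : π a ≠ 0) (hcompact : IsCompactOperator (π a)) (b : A) : IsCompactOperator (π b) := by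
  let K : AddSubgroup A :=
    (compactOperator (RingHom.id ℂ) E E).toAddSubgroup.comap (π : A →+ (E →L[ℂ] E))
  have hK (x : A) : x ∈ K ↔ IsCompactOperator (π x) := Iff.rfl
  rcases hA.eq_bot_or_eq_top (I := K)
    (isClosed_setOfPred_isCompactOperator.preimage (map_continuous π))
    (fun a x hx ↦ by rw [hK] at hx ⊢; rw [map_mul]; exact hx.clm_comp (π a))
    (fun a x hx ↦ by rw [hK] at hx ⊢; rw [map_mul]; exact hx.comp_clm (π a)) with h | h
  · rw [← hK, h, AddSubgroup.mem_bot] at hcompact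
    exact absurd (hcompact ▸ map_zero π) ha
  · exact (hK b).1 (h ▸ AddSubgroup.mem_top b)

theorem IsSimpleCStarAlgebra.injective_and_range_eq_of_rankOne_mem [Nontrivial E]
    (hA : IsSimpleCStarAlgebra A) (hrank : ∀ x y, ∃ a, π a = rankOne ℂ x y) :
    Function.Injective π ∧ Set.range π = {T : E →L[ℂ] E | IsCompactOperator T} := by
  obtain ⟨x, hx⟩ := exists_ne (0 : E)
  obtain ⟨a, ha⟩ := hrank x x
  have ha0 : π a ≠ 0 := by
    rw [ha, ← norm_ne_zero_iff, norm_rankOne]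
    positivity
  have hinj : Function.Injective π := hA.injective_of_ne_zero fun h ↦ ha0 (by rw [h]; rfl)
  refine ⟨hinj, subset_antisymm ?_ fun T hT ↦ ?_⟩
  · rintro _ ⟨b, rfl⟩
    exact hA.isCompactOperator_map ha0 (ha ▸ isCompactOperator_rankOne x x) b
  · have hclosed : IsClosed (Set.range π) :=
      (NonUnitalStarAlgHom.isometry π hinj).isClosedEmbedding.isClosed_range
    rw [← hclosed.closure_eq]
    exact mem_closure_of_isCompactOperator (LinearMap.range (π : A →ₗ[ℂ] (E →L[ℂ] E))) hrank hT

theorem IsSimpleCStarAlgebra.exists_linearEquiv_compactOperator [Nontrivial E]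
    (hA : IsSimpleCStarAlgebra A) (hrank : ∀ x y, ∃ a, π a = rankOne ℂ x y) :
    ∃ f : A ≃ₗ[ℂ] compactOperator (RingHom.id ℂ) E E, ∀ a, (f a : E →L[ℂ] E) = π a := by
  obtain ⟨hinj, hrange⟩ := hA.injective_and_range_eq_of_rankOne_mem hrank
  let f : A →ₗ[ℂ] compactOperator (RingHom.id ℂ) E E :=
    LinearMap.codRestrict _ (π : A →ₗ[ℂ] (E →L[ℂ] E)) fun a ↦ hrange.subset (Set.mem_range_self a)
  have hf : Function.Bijective f := by
    refine ⟨fun a b hab ↦ hinj (congrArg Subtype.val hab), fun T ↦ ?_⟩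
    obtain ⟨a, ha⟩ := hrange.superset T.2
    exact ⟨a, Subtype.ext ha⟩
  exact ⟨.ofBijective f hf, fun _ ↦ rfl⟩

theorem IsSimpleCStarAlgebra.exists_starIsomorphism_compactOperators [Nontrivial E]
    [TopologicalSpace.SeparableSpace E] (hA : IsSimpleCStarAlgebra A)
    (hfin : ¬ FiniteDimensional ℂ A) (hrank : ∀ x y, ∃ a, π a = rankOne ℂ x y) :
    ∃ f : A ≃ₗ[ℂ] CompactOperators,
      (∀ x y, (f (x * y) : H →L[ℂ] H) = (f x : H →L[ℂ] H) * (f y : H →L[ℂ] H)) ∧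
      ∀ x, (f (star x) : H →L[ℂ] H) = star (f x : H →L[ℂ] H) := by
  obtain ⟨hinj, -⟩ := hA.injective_and_range_eq_of_rankOne_mem hrank
  obtain ⟨U⟩ := nonempty_linearIsometryEquiv_l2 fun (_ : FiniteDimensional ℂ E) ↦
    hfin (FiniteDimensional.of_injective (π : A →ₗ[ℂ] (E →L[ℂ] E)) hinj)
  let ρ : A →⋆ₙₐ[ℂ] (H →L[ℂ] H) := U.conjStarAlgEquiv.toNonUnitalStarAlgHom.comp π
  have hρ (x y : H) : ∃ a, ρ a = rankOne ℂ x y := by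
    obtain ⟨a, ha⟩ := hrank (U.symm x) (U.symm y)
    refine ⟨a, ContinuousLinearMap.ext fun z ↦ ?_⟩
    change U (π a (U.symm z)) = _
    rw [ha, rankOne_apply, rankOne_apply, map_smul, U.apply_symm_apply, ← U.symm.inner_map_map]
  have : Nontrivial H := U.symm.toEquiv.nontrivial
  obtain ⟨f, hf⟩ := hA.exists_linearEquiv_compactOperator hρ
  have hcompact : compactOperator (RingHom.id ℂ) H H = CompactOperators := rfl
  refine ⟨f.trans (.ofEq _ _ hcompact), fun x y ↦ ?_, fun x ↦ ?_⟩
  · exact (hf _).trans <| (map_mul ρ x y).trans <| congrArg₂ (· * ·) (hf x).symm (hf y).symm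
  · exact (hf _).trans <| (map_star ρ x).trans <| congrArg star (hf x).symm

end Representation

section LeftIdeal

open InnerProductSpace

variable {A : Type*} [NonUnitalCStarAlgebra A]

theorem IsAFPresentation.separableSpace {S : ℕ → NonUnitalStarSubalgebra ℂ A}
    (hS : IsAFPresentation A S) : TopologicalSpace.SeparableSpace A := by
  rw [← hS.2.2.isSeparable_iff, TopologicalSpace.isSeparable_iUnion]
  intro k
  obtain ⟨s, hs⟩ : (S k).toNonUnitalSubalgebra.toSubmodule.FG :=
    Module.Finite.iff_fg.1 (hS.2.1 k)
  have hspan : TopologicalSpace.IsSeparable (Submodule.span ℂ (s : Set A) : Set A) :=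
    s.finite_toSet.isSeparable.span
  rwa [hs] at hspan

theorem norm_eq_one_of_isStarProjection {e : A} (he : IsStarProjection e) (he0 : e ≠ 0) :
    ‖e‖ = 1 := by
  have hnorm := CStarRing.norm_star_mul_self (x := e)
  rw [he.isSelfAdjoint.star_eq, he.isIdempotentElem.eq] at hnorm
  exact (mul_eq_left₀ (norm_ne_zero_iff.2 he0)).1 hnorm.symm

theorem eq_norm_sq_of_star_mul_self_eq_smul {e x : A} (he : IsStarProjection e) (he0 : e ≠ 0)
    {c : ℂ} (hc : star x * x = c • e) : c = (‖x‖ : ℂ) ^ 2 := by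
  obtain ⟨r, rfl⟩ : ∃ r : ℝ, (r : ℂ) = c := by
    have hstar : star c • e = c • e := by
      rw [← hc, ← (IsSelfAdjoint.star_mul_self x).star_eq, hc, star_smul, he.isSelfAdjoint.star_eq]
    exact (Complex.conj_eq_iff_real.1 (smul_left_injective ℂ he0 hstar)).imp fun _ ↦ Eq.symm
  let _ := CStarAlgebra.spectralOrder A
  have := CStarAlgebra.spectralOrderedRing A
  rw [Complex.coe_smul] at hc
  have hr : 0 ≤ r := by
    by_contra! hr
    have hnonpos : r • e ≤ 0 := by
      rw [← neg_nonneg, ← neg_smul]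
      exact smul_nonneg (neg_nonneg.2 hr.le) he.nonneg
    have hzero : r • e = 0 := hnonpos.antisymm (hc ▸ star_mul_self_nonneg x)
    exact (smul_ne_zero hr.ne he0) hzero
  have hnorm := CStarRing.norm_star_mul_self (x := x)
  rw [hc, norm_smul, norm_eq_one_of_isStarProjection he he0, mul_one,
    Real.norm_of_nonneg hr] at hnorm
  rw [hnorm]
  push_cast
  ring

variable {e : A}

theorem IsMinimalProjection.exists_star_mul_eq_smul (he : IsMinimalProjection e)
    (x y : leftIdeal e) : ∃ c : ℂ, star (x : A) * y = c • e := by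
  obtain ⟨c, hc⟩ := he.hasScalarCorner (star (x : A) * y)
  refine ⟨c, ?_⟩
  have hx : e * star (x : A) = star (x : A) := by
    simpa [he.isStarProjection.isSelfAdjoint.star_eq] using congrArg star (mem_leftIdeal.1 x.2)
  rw [← hc, ← mul_assoc, hx, mul_assoc, mem_leftIdeal.1 y.2]

variable [he : Fact (IsMinimalProjection e)]

/-- The Hilbert space structure on `A e` coming from `e A e = ℂ e`, in which `⟪x, y⟫` is the scalar
`c` with `x⋆ y = c e`. Its norm is the one inherited from `A`. -/
instance : InnerProductSpace ℂ (leftIdeal e) :=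
  have hsmul (x y : leftIdeal e) := (he.out.exists_star_mul_eq_smul x y).choose_spec
  have huniq {x y : leftIdeal e} {c : ℂ} (h : star (x : A) * y = c • e) :
      (he.out.exists_star_mul_eq_smul x y).choose = c :=
    smul_left_injective ℂ he.out.ne_zero ((hsmul x y).symm.trans h)
  { inner x y := (he.out.exists_star_mul_eq_smul x y).choose
    norm_sq_eq_re_inner x := by
      rw [eq_norm_sq_of_star_mul_self_eq_smul he.out.isStarProjection he.out.ne_zero (hsmul x x)]
      norm_cast
    conj_inner_symm x y := (huniq <| by
      simpa [he.out.isStarProjection.isSelfAdjoint.star_eq] using congrArg star (hsmul y x)).symm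
    add_left x y z := huniq <| by
      rw [add_smul, ← hsmul, ← hsmul, ← add_mul, ← star_add, Submodule.coe_add]
    smul_left x y r := huniq <| by
      rw [mul_smul, ← hsmul, ← smul_mul_assoc, Submodule.coe_smul, star_smul]
      rfl }

theorem star_mul_eq_inner_smul (x y : leftIdeal e) : star (x : A) * y = inner ℂ x y • e :=
  (he.out.exists_star_mul_eq_smul x y).choose_spec

instance : CompleteSpace (leftIdeal e) := by
  have : IsClosed (leftIdeal e : Set A) :=
    isClosed_eq (continuous_mul_const e) continuous_id
  exact this.completeSpace_coe

instance : Nontrivial (leftIdeal e) :=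
  ⟨0, ⟨e, he.out.isStarProjection.isIdempotentElem⟩, fun h ↦
    he.out.ne_zero (congrArg Subtype.val h).symm⟩

variable (e) in
/-- The representation of `A` on the Hilbert space `A e` by left multiplication. -/
def leftIdealRep : A →⋆ₙₐ[ℂ] (leftIdeal e →L[ℂ] leftIdeal e) where
  toFun a := ((ContinuousLinearMap.mul ℂ A a).comp (leftIdeal e).subtypeL).codRestrict _ fun x ↦ by
    change a * x * e = a * x
    rw [mul_assoc, mem_leftIdeal.1 x.2]
  map_smul' c a := by ext x; exact smul_mul_assoc c a (x : A)
  map_zero' := by ext x; exact zero_mul (x : A)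
  map_add' a b := by ext x; exact add_mul a b (x : A)
  map_mul' a b := by ext x; exact mul_assoc a b (x : A)
  map_star' a := by
    rw [ContinuousLinearMap.star_eq_adjoint, ContinuousLinearMap.eq_adjoint_iff]
    intro x y
    apply smul_left_injective ℂ he.out.ne_zero
    change inner ℂ _ y • e = inner ℂ x _ • e
    rw [← star_mul_eq_inner_smul, ← star_mul_eq_inner_smul]
    change star (star a * x : A) * y = star (x : A) * (a * y)
    rw [star_mul, star_star, mul_assoc]

theorem leftIdealRep_apply (a : A) (x : leftIdeal e) : (leftIdealRep e a x : A) = a * x := rfl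

theorem leftIdealRep_mul_star (x y : leftIdeal e) :
    leftIdealRep e (x * star (y : A)) = rankOne ℂ x y := by
  ext z
  rw [leftIdealRep_apply, mul_assoc, star_mul_eq_inner_smul, mul_smul_comm, mem_leftIdeal.1 x.2,
    rankOne_apply, Submodule.coe_smul]

end LeftIdeal

/-- An infinite-dimensional simple AF C*-algebra with a presentation failing
the Fermion property is *-isomorphic to the compact operators: there is a
ℂ-linear bijection which is multiplicative and star-preserving (computed in
the ambient algebra of bounded operators, whose star is the Hilbert space
adjoint). -/
theorem starIsomorphic_compactOperators_of_not_fermion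
    (A : Type*) [NonUnitalCStarAlgebra A]
    (SA : ℕ → NonUnitalStarSubalgebra ℂ A) (hSA : IsAFPresentation A SA)
    (hAsimple : IsSimpleCStarAlgebra A)
    (hAinf : ¬ FiniteDimensional ℂ A)
    (hnotF : ¬ HasFermionProperty A SA) :
    ∃ f : A ≃ₗ[ℂ] ↥CompactOperators,
      (∀ x y : A, ((f (x * y) : H →L[ℂ] H)) = (f x : H →L[ℂ] H) * (f y : H →L[ℂ] H)) ∧
      (∀ x : A, ((f (star x) : H →L[ℂ] H)) = star (f x : H →L[ℂ] H)) := by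
  have : Nontrivial A := by
    by_contra h
    rw [not_nontrivial_iff_subsingleton] at h
    exact hAinf inferInstance
  obtain ⟨e, he⟩ := hSA.exists_isMinimalProjection hAsimple hnotF
  have : Fact (IsMinimalProjection e) := ⟨he⟩
  have := hSA.separableSpace
  have : TopologicalSpace.SeparableSpace (leftIdeal e) :=
    (TopologicalSpace.IsSeparable.of_separableSpace (leftIdeal e : Set A)).separableSpace
  exact hAsimple.exists_starIsomorphism_compactOperators (π := leftIdealRep e) hAinf
    fun x y ↦ ⟨(x : A) * star (y : A), leftIdealRep_mul_star x y⟩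
end
end

section
/- The Banach space c₀ = C₀(ℕ, ℂ) of complex sequences converging to 0, with the supremum norm, is not isomorphic as a Banach space to K, the space of compact operators on ℓ²(ℕ, ℂ) with the operator norm; that is, there is no continuous ℂ-linear bijection between them with continuous inverse. -/
/-!
Statement 10.

`c₀ = C₀(ℕ, ℂ)` is not isomorphic as a Banach space to the compact operators
`K` on `ℓ²(ℕ, ℂ)`.
-/

noncomputable section

local notation "H" => lp (fun _ : ℕ => ℂ) 2

/-!
Let `F` be an infinite-dimensional inner product space and `E ≠ 0` a normed space. For `φ` a
functional of norm one on `E`, the map `v ↦ φ(·) v` embeds `F` isometrically into the compact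
operators from `E` to `F`. On the other hand `F` does not embed into `c₀`: the images of an
orthonormal sequence are bounded and tend to zero pointwise, so a gliding hump selects any number
`n` of them whose sum has norm bounded independently of `n`, while the sum of the corresponding `n`
orthonormal vectors has norm `√n`.
-/

open Filter Topology
open scoped ZeroAtInfty

section ZeroAtInfty

variable {X V : Type*} [TopologicalSpace X] [SeminormedAddCommGroup V]

theorem zeroAtInfty_norm_apply_le (f : C₀(X, V)) (x : X) : ‖f x‖ ≤ ‖f‖ :=
  f.toBCF.norm_coe_le_norm x

theorem zeroAtInfty_norm_le_iff {f : C₀(X, V)} {C : ℝ} (hC : 0 ≤ C) :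
    ‖f‖ ≤ C ↔ ∀ x, ‖f x‖ ≤ C :=
  BoundedContinuousFunction.norm_le (f := f.toBCF) hC

/-- Evaluation at a point, as a continuous linear map on `C₀(X, V)`: the analogue of
`BoundedContinuousFunction.evalCLM`. -/
def zeroAtInftyEvalCLM (𝕜 : Type*) [NormedField 𝕜] [NormedSpace 𝕜 V] (x : X) :
    C₀(X, V) →L[𝕜] V :=
  LinearMap.mkContinuous
    { toFun := fun f => f x
      map_add' := fun _ _ => rfl
      map_smul' := fun _ _ => rfl } 1
    fun f => (zeroAtInfty_norm_apply_le f x).trans_eq (one_mul _).symm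

theorem finite_setOf_le_norm_zeroAtInfty [DiscreteTopology X] (f : C₀(X, V)) {δ : ℝ}
    (hδ : 0 < δ) : {x | δ ≤ ‖f x‖}.Finite := by
  have hf : Tendsto (fun x => ‖f x‖) cofinite (𝓝 0) := by
    simpa only [cocompact_eq_cofinite, norm_zero] using (zero_at_infty f).norm
  simpa only [eventually_cofinite, not_lt] using hf.eventually_lt_const hδ

variable {ι : Type*} {g : ι → C₀(X, V)} {M C : ℝ}

theorem eventually_norm_add_lt_of_tendsto_apply_zero [DiscreteTopology X] {l : Filter ι}
    (hM : ∀ i, ‖g i‖ ≤ M) (hg : ∀ x, Tendsto (fun i => g i x) l (𝓝 0)) (hMC : M < C)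
    {f : C₀(X, V)} (hf : ‖f‖ < C) : ∀ᶠ i in l, ‖f + g i‖ < C := by
  obtain ⟨D, hD, hDC⟩ := exists_between (max_lt hf hMC)
  obtain ⟨hfD, hMD⟩ := max_lt_iff.1 hD
  obtain ⟨δ, hδ, hδD⟩ := exists_between (lt_min (sub_pos.2 hfD) (sub_pos.2 hMD))
  obtain ⟨hδf, hδM⟩ := lt_min_iff.1 hδD
  have hsmall : ∀ᶠ i in l, ∀ x ∈ {x | δ ≤ ‖f x‖}, ‖g i x‖ < δ :=
    (eventually_all_finite (finite_setOf_le_norm_zeroAtInfty f hδ)).2 fun x _ =>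
      (tendsto_zero_iff_norm_tendsto_zero.1 (hg x)).eventually_lt_const hδ
  filter_upwards [hsmall] with i hi
  refine lt_of_le_of_lt ((zeroAtInfty_norm_le_iff ((norm_nonneg f).trans hfD.le)).2 fun x => ?_) hDC
  have hadd : ‖(f + g i) x‖ ≤ ‖f x‖ + ‖g i x‖ := norm_add_le _ _
  rcases le_or_gt δ ‖f x‖ with hx | hx
  · linarith [zeroAtInfty_norm_apply_le f x, hi x hx]
  · linarith [zeroAtInfty_norm_apply_le (g i) x, hM i]

theorem exists_card_eq_norm_sum_lt_of_tendsto_apply_zero [DiscreteTopology X] [Infinite ι]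
    (hM : ∀ i, ‖g i‖ ≤ M) (hg : ∀ x, Tendsto (fun i => g i x) cofinite (𝓝 0)) (hMC : M < C)
    (n : ℕ) : ∃ s : Finset ι, s.card = n ∧ ‖∑ i ∈ s, g i‖ < C := by
  classical
  induction n with
  | zero =>
    obtain ⟨i⟩ := ‹Infinite ι›.nonempty
    exact ⟨∅, rfl, by simpa using ((norm_nonneg _).trans (hM i)).trans_lt hMC⟩
  | succ n ih =>
    obtain ⟨s, hcard, hs⟩ := ih
    obtain ⟨i, hi, his⟩ := ((eventually_norm_add_lt_of_tendsto_apply_zero hM hg hMC hs).and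
      s.finite_toSet.eventually_cofinite_notMem).exists
    refine ⟨insert i s, by rw [Finset.card_insert_of_notMem his, hcard], ?_⟩
    rwa [Finset.sum_insert his, add_comm]

end ZeroAtInfty

section InnerProductSpace

variable {𝕜 F ι : Type*} [RCLike 𝕜]

section Orthonormal

variable [SeminormedAddCommGroup F] [InnerProductSpace 𝕜 F] {u : ι → F}

theorem norm_sq_sum_smul_of_orthonormal (hu : Orthonormal 𝕜 u) (a : ι → 𝕜) (s : Finset ι) :
    ‖∑ i ∈ s, a i • u i‖ ^ 2 = ∑ i ∈ s, ‖a i‖ ^ 2 := by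
  have h := hu.inner_sum a a s
  simp only [inner_self_eq_norm_sq_to_K, RCLike.conj_mul] at h
  exact_mod_cast h

theorem norm_sum_of_orthonormal (hu : Orthonormal 𝕜 u) (s : Finset ι) :
    ‖∑ i ∈ s, u i‖ = √s.card := by
  rw [← Real.sqrt_sq (norm_nonneg _)]
  simpa using congrArg Real.sqrt (norm_sq_sum_smul_of_orthonormal hu (fun _ => 1) s)

theorem sum_norm_sq_apply_le_of_orthonormal (hu : Orthonormal 𝕜 u) (φ : StrongDual 𝕜 F)
    (s : Finset ι) : ∑ i ∈ s, ‖φ (u i)‖ ^ 2 ≤ ‖φ‖ ^ 2 := by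
  set S := ∑ i ∈ s, ‖φ (u i)‖ ^ 2 with hS
  have hS0 : 0 ≤ S := Finset.sum_nonneg fun _ _ => sq_nonneg _
  -- `v` is the Riesz representative of `φ` on the span of the `u i` with `i ∈ s`.
  set v := ∑ i ∈ s, star (φ (u i)) • u i with hv
  have hv_norm : ‖v‖ ^ 2 = S := by
    simpa only [norm_star] using norm_sq_sum_smul_of_orthonormal hu (fun i => star (φ (u i))) s
  have hφv : φ v = S := by
    simp [hv, hS, RCLike.conj_mul]
  have hSv : S ≤ ‖φ‖ * ‖v‖ := by
    simpa [hφv, abs_of_nonneg hS0] using φ.le_opNorm v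
  have hsq : S * S ≤ ‖φ‖ ^ 2 * S := by
    calc S * S ≤ (‖φ‖ * ‖v‖) * (‖φ‖ * ‖v‖) := mul_self_le_mul_self hS0 hSv
      _ = ‖φ‖ ^ 2 * S := by rw [← hv_norm]; ring
  rcases hS0.eq_or_lt with h | h
  · exact h ▸ sq_nonneg _
  · exact le_of_mul_le_mul_right hsq h

theorem tendsto_apply_zero_of_orthonormal (hu : Orthonormal 𝕜 u) (φ : StrongDual 𝕜 F) :
    Tendsto (fun i => φ (u i)) cofinite (𝓝 0) := by
  have hsum : Summable fun i => ‖φ (u i)‖ ^ 2 :=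
    summable_of_sum_le (fun _ => sq_nonneg _) (sum_norm_sq_apply_le_of_orthonormal hu φ)
  rw [tendsto_zero_iff_norm_tendsto_zero]
  simpa [Real.sqrt_sq] using hsum.tendsto_cofinite_zero.sqrt

end Orthonormal

theorem exists_orthonormal_nat_of_not_finiteDimensional [NormedAddCommGroup F]
    [InnerProductSpace 𝕜 F] (hF : ¬ FiniteDimensional 𝕜 F) : ∃ u : ℕ → F, Orthonormal 𝕜 u := by
  let b := Module.Basis.ofVectorSpace 𝕜 F
  have : Infinite (Module.Basis.ofVectorSpaceIndex 𝕜 F) :=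
    not_finite_iff_infinite.1 fun _ => hF (Module.Finite.of_basis b)
  exact ⟨_, InnerProductSpace.gramSchmidtNormed_orthonormal
    (b.linearIndependent.comp _ (Infinite.natEmbedding _).injective)⟩

theorem not_finiteDimensional_lp_two [Infinite ι] :
    ¬ FiniteDimensional 𝕜 (lp (fun _ : ι => 𝕜) 2) := fun _ =>
  have b : HilbertBasis ι 𝕜 (lp (fun _ : ι => 𝕜) 2) := .ofRepr (.refl 𝕜 _)
  not_finite_iff_infinite.2 ‹Infinite ι› b.orthonormal.linearIndependent.finite

theorem not_isEmbedding_zeroAtInfty_of_not_finiteDimensional {X : Type*} [TopologicalSpace X]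
    [DiscreteTopology X] [NormedAddCommGroup F] [InnerProductSpace 𝕜 F]
    (hF : ¬ FiniteDimensional 𝕜 F) (T : F →L[𝕜] C₀(X, 𝕜)) : ¬ IsEmbedding T := by
  intro hT
  obtain ⟨K, hK⟩ := T.antilipschitz_of_isEmbedding hT
  obtain ⟨u, hu⟩ := exists_orthonormal_nat_of_not_finiteDimensional hF
  have hbound (i : ℕ) : ‖T (u i)‖ ≤ ‖T‖ := T.unit_le_opNorm _ (hu.norm_eq_one i).le
  have hpointwise (x : X) : Tendsto (fun i => T (u i) x) cofinite (𝓝 0) :=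
    tendsto_apply_zero_of_orthonormal hu ((zeroAtInftyEvalCLM 𝕜 x).comp T)
  obtain ⟨n, hn⟩ := exists_nat_gt ((K * (‖T‖ + 1)) ^ 2)
  obtain ⟨s, rfl, hs⟩ :=
    exists_card_eq_norm_sum_lt_of_tendsto_apply_zero hbound hpointwise (lt_add_one ‖T‖) n
  have hle : √s.card ≤ K * (‖T‖ + 1) := by
    calc √s.card = ‖∑ i ∈ s, u i‖ := (norm_sum_of_orthonormal hu s).symm
      _ ≤ K * ‖T (∑ i ∈ s, u i)‖ := T.bound_of_antilipschitz hK _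
      _ ≤ K * (‖T‖ + 1) := by rw [map_sum]; gcongr
  exact hle.not_gt (Real.lt_sqrt_of_sq_lt hn)

end InnerProductSpace

section CompactOperator

variable {𝕜 E F : Type*} [NontriviallyNormedField 𝕜] [LocallyCompactSpace 𝕜]

theorem isCompactOperator_smulRight [AddCommMonoid E] [Module 𝕜 E] [TopologicalSpace E]
    [AddCommMonoid F] [Module 𝕜 F] [TopologicalSpace F] [ContinuousSMul 𝕜 F]
    (φ : StrongDual 𝕜 E) (v : F) : IsCompactOperator (φ.smulRight v) :=
  (isCompactOperator_of_locallyCompactSpace_rng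
    (ContinuousLinearMap.toSpanSingleton 𝕜 v)).comp_clm φ

/-- The embedding `v ↦ φ(·) v` of `F` into the compact operators from `E` to `F` given by a
functional `φ` of norm one. -/
def smulRightLinearIsometry [SeminormedAddCommGroup E] [NormedSpace 𝕜 E]
    [SeminormedAddCommGroup F] [NormedSpace 𝕜 F] (φ : StrongDual 𝕜 E) (hφ : ‖φ‖ = 1) :
    F →ₗᵢ[𝕜] compactOperator (RingHom.id 𝕜) E F where
  toFun v := ⟨φ.smulRight v, isCompactOperator_smulRight φ v⟩
  map_add' v w := Subtype.ext (ContinuousLinearMap.ext fun x => smul_add (φ x) v w)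
  map_smul' c v := Subtype.ext (ContinuousLinearMap.ext fun x => smul_comm (φ x) c v)
  norm_map' v := by
    change ‖φ.smulRight v‖ = ‖v‖
    rw [ContinuousLinearMap.norm_smulRight_apply, hφ, one_mul]

end CompactOperator

theorem c0_not_linearly_homeomorphic_compacts_general {𝕜 X E F : Type*} [RCLike 𝕜]
    [TopologicalSpace X] [DiscreteTopology X] [NormedAddCommGroup E] [NormedSpace 𝕜 E]
    [Nontrivial E] [NormedAddCommGroup F] [InnerProductSpace 𝕜 F] (hF : ¬ FiniteDimensional 𝕜 F)
    (T : compactOperator (RingHom.id 𝕜) E F →L[𝕜] C₀(X, 𝕜)) :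
    ¬ IsEmbedding T := by
  intro hT
  obtain ⟨x, hx⟩ := exists_ne (0 : E)
  obtain ⟨φ, hφ, -⟩ := exists_dual_vector 𝕜 x (norm_ne_zero_iff.2 hx)
  let J := smulRightLinearIsometry (F := F) φ hφ
  exact not_isEmbedding_zeroAtInfty_of_not_finiteDimensional hF
    (T.comp J.toContinuousLinearMap) (hT.comp J.isometry.isEmbedding)

theorem compactOperators_eq_compactOperator :
    CompactOperators = compactOperator (RingHom.id ℂ) H H :=
  rfl

theorem c0_not_linearly_homeomorphic_compacts :
    ¬ Nonempty (ZeroAtInftyContinuousMap ℕ ℂ ≃L[ℂ] ↥CompactOperators) := by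
  rw [compactOperators_eq_compactOperator]
  rintro ⟨e⟩
  have : Nontrivial H :=
    not_subsingleton_iff_nontrivial.1 fun _ =>
      not_finiteDimensional_lp_two (𝕜 := ℂ) (ι := ℕ) inferInstance
  exact c0_not_linearly_homeomorphic_compacts_general not_finiteDimensional_lp_two
    e.symm.toContinuousLinearMap e.symm.toHomeomorph.isEmbedding
end
end
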